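/- Let K be a number field and S a finite set of places of K containing all the archimedean ones. Let φ be an endomorphism of ℙ¹ defined over K of degree d ≥ 2 with good reduction outside S, and let P ∈ ℙ¹(K) be a periodic point of φ of period 3. Then |Tail(φ,K,P)| ≤ ((1 + 3B(|S|))B(|S|) + 1)(d−1), where B(s) = 2^{16s}. -/

import Mathlib

open NumberField IsDedekindDomain MvPolynomial
open scoped Classical nonZeroDivisors

set_option synthInstance.maxHeartbeats 1000000
set_option maxHeartbeats 1000000

noncomputable section

/-- The projective line over `K`. -/
abbrev P1 (K : Type*) [Field K] := Projectivization K (Fin 2 → K)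

variable {K : Type*} [Field K] [NumberField K]

/-- The additive `v`-adic valuation (order) of `x ∈ K`, with junk value `0` at `x = 0`,
normalized so that it is surjective onto `ℤ`. -/
def ordAt (v : HeightOneSpectrum (𝓞 K)) (x : K) : ℤ :=
  if hx : x = 0 then 0
  else - Multiplicative.toAdd (WithZero.unzero ((v.valuation K).ne_zero_iff.mpr hx))

/-- `min (v(x), v(y))` for a pair of coordinates, not both zero. -/
def minOrd (v : HeightOneSpectrum (𝓞 K)) (x y : K) : ℤ :=
  if x = 0 then ordAt v y else if y = 0 then ordAt v x else min (ordAt v x) (ordAt v y)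

/-- The `v`-adic logarithmic distance between two points of `ℙ¹(K)`:
`δ_v(P,Q) = v(x₁y₂ - x₂y₁) - min(v x₁, v y₁) - min(v x₂, v y₂)`, with value `⊤` when `P = Q`
(it is independent of the choice of homogeneous coordinates, so we compute it on the chosen
representatives). -/
def logDist (v : HeightOneSpectrum (𝓞 K)) (P Q : P1 K) : WithTop ℤ :=
  if P = Q then ⊤
  else ((ordAt v (P.rep 0 * Q.rep 1 - P.rep 1 * Q.rep 0)
        - minOrd v (P.rep 0) (P.rep 1) - minOrd v (Q.rep 0) (Q.rep 1) : ℤ) : WithTop ℤ)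

/-- An endomorphism of `ℙ¹` of degree `d` defined over `K`, given by a pair of homogeneous
forms of degree `d` with no common zero over the algebraic closure, together with the induced
self-map of `ℙ¹(K)`. -/
structure P1Map (K : Type*) [Field K] (d : ℕ) where
  toFun : P1 K → P1 K
  F : MvPolynomial (Fin 2) K
  G : MvPolynomial (Fin 2) K
  homF : F.IsHomogeneous d
  homG : G.IsHomogeneous d
  coprime : ∀ x y : AlgebraicClosure K,
    aeval ![x, y] F = 0 → aeval ![x, y] G = 0 → x = 0 ∧ y = 0
  compat : ∀ (x y : K) (hxy : ![x, y] ≠ 0)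
    (h : ![eval ![x, y] F, eval ![x, y] G] ≠ 0),
    toFun (Projectivization.mk K ![x, y] hxy) =
      Projectivization.mk K ![eval ![x, y] F, eval ![x, y] G] h

variable {d : ℕ}

/-- `φ` has good reduction at the finite place `v`: some representing pair of forms has
coefficients in the valuation ring at `v`, not all in the maximal ideal, and the reductions
of the two forms modulo `v` have no common zero in `ℙ¹` of the algebraic closure of the
residue field. -/
def GoodReductionAt (φ : P1Map K d) (v : HeightOneSpectrum (𝓞 K)) : Prop :=
  ∃ c : K, c ≠ 0 ∧
    ∃ F₀ G₀ : MvPolynomial (Fin 2) (v.valuation (K := K)).valuationSubring,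
      MvPolynomial.map ((v.valuation (K := K)).valuationSubring.subtype) F₀ = C c * φ.F ∧
      MvPolynomial.map ((v.valuation (K := K)).valuationSubring.subtype) G₀ = C c * φ.G ∧
      ((∃ m, F₀.coeff m ∉ IsLocalRing.maximalIdeal (v.valuation (K := K)).valuationSubring) ∨
        (∃ m, G₀.coeff m ∉ IsLocalRing.maximalIdeal (v.valuation (K := K)).valuationSubring)) ∧
      ∀ x y : AlgebraicClosure
          (IsLocalRing.ResidueField (v.valuation (K := K)).valuationSubring),
        eval ![x, y] (MvPolynomial.map
          ((algebraMap (IsLocalRing.ResidueField (v.valuation (K := K)).valuationSubring)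
              (AlgebraicClosure _)).comp
            (IsLocalRing.residue _)) F₀) = 0 →
        eval ![x, y] (MvPolynomial.map
          ((algebraMap (IsLocalRing.ResidueField (v.valuation (K := K)).valuationSubring)
              (AlgebraicClosure _)).comp
            (IsLocalRing.residue _)) G₀) = 0 →
        x = 0 ∧ y = 0

/-- `φ` has good reduction outside `S`, where `S` consists of all archimedean places together
with the finite places in `T`. -/
def GoodReductionOutside (φ : P1Map K d) (T : Finset (HeightOneSpectrum (𝓞 K))) : Prop :=
  ∀ v ∉ T, GoodReductionAt φ v

/-- `P` is a periodic point of `φ`. -/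
def IsPeriodicPoint (φ : P1Map K d) (P : P1 K) : Prop :=
  ∃ n, 0 < n ∧ φ.toFun^[n] P = P

/-- `P` is a preperiodic point of `φ`. -/
def IsPreperiodicPoint (φ : P1Map K d) (P : P1 K) : Prop :=
  ∃ m, IsPeriodicPoint φ (φ.toFun^[m] P)

/-- `P` is a tail point of `φ`: preperiodic but not periodic. -/
def IsTailPoint (φ : P1Map K d) (P : P1 K) : Prop :=
  IsPreperiodicPoint φ P ∧ ¬ IsPeriodicPoint φ P

/-- The set `Tail(φ,K,P)` of `K`-rational tail points of `P`: non-periodic points having `P`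
in their forward orbit. -/
def TailOf (φ : P1Map K d) (P : P1 K) : Set (P1 K) :=
  {Q | ¬ IsPeriodicPoint φ Q ∧ ∃ n, φ.toFun^[n] Q = P}

/-- `P = [a:b]` is a critical point of `φ = [F:G]`: the algebraic condition
`φ([x:y]) = φ([a:b])`, i.e. the form `G(a,b)·F(X,Y) - F(a,b)·G(X,Y)`, vanishes to order
at least `2` at `[a:b]`. -/
def IsCriticalPt (φ : P1Map K d) (P : P1 K) : Prop :=
  ∃ (a b : K) (hab : ![a, b] ≠ 0), P = Projectivization.mk K ![a, b] hab ∧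
    (C b * X 0 - C a * X 1) ^ 2 ∣
      (C (eval ![a, b] φ.G) * φ.F - C (eval ![a, b] φ.F) * φ.G)

/-- `P` belongs to a critical cycle of `φ`: it lies in the orbit of a critical periodic
point. -/
def InCriticalCycle (φ : P1Map K d) (P : P1 K) : Prop :=
  ∃ Q, IsCriticalPt φ Q ∧ IsPeriodicPoint φ Q ∧ ∃ n, φ.toFun^[n] Q = P

/-- The cardinality `|S|` of the set of places `S` consisting of all archimedean places
together with the finite places in `T`. -/
def sCard (K : Type*) [Field K] [NumberField K] (T : Finset (HeightOneSpectrum (𝓞 K))) : ℕ :=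
  T.card + Fintype.card (InfinitePlace K)

/-- `B(s) = 2^{16 s}`. -/
def Bconst (s : ℕ) : ℕ := 2 ^ (16 * s)

/-- `C(n,s) = e^{(6n)^{3n} (n s + 1 - n)}`. -/
def Cconst (n s : ℕ) : ℝ := Real.exp ((6 * n : ℝ) ^ (3 * n) * (n * s + 1 - n))

/-- `CV(d,s) = (3B(s)+13)d + 27B(s) + C(5,s) + 6C(3,s) + 32`. -/
def CVconst (d s : ℕ) : ℝ :=
  (3 * (Bconst s : ℝ) + 13) * d + 27 * (Bconst s : ℝ) + Cconst 5 s + 6 * Cconst 3 s + 32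

/-- `L₁(d,s) = (d-1)(1 + d(1 + B(s)))`. -/
def L1const (d s : ℕ) : ℕ := (d - 1) * (1 + d * (1 + Bconst s))

/-- `L₂(d,s) = max{(2(C(3,s)+2)+1)d + 1, (d-1)(1 + B(s)(B(s) + C(3,s) + 3))}`. -/
def L2const (d s : ℕ) : ℝ :=
  max ((2 * (Cconst 3 s + 2) + 1) * d + 1)
    (((d : ℝ) - 1) * (1 + (Bconst s : ℝ) * ((Bconst s : ℝ) + Cconst 3 s + 3)))

/-- `L₃(d,s) = ((1 + 3B(s))B(s) + 1)(d-1)`. -/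
def L3const (d s : ℕ) : ℕ := ((1 + 3 * Bconst s) * Bconst s + 1) * (d - 1)

/-- `L₄(d,s) = (C(3,s) + 3)(d-1)`. -/
def L4const (d s : ℕ) : ℝ := (Cconst 3 s + 3) * ((d : ℝ) - 1)

end

namespace TailBound

noncomputable section Pade

variable {K : Type*} [Field K]

/-- The power series `(X + u)⁻¹`. -/
def gs (u : K) : PowerSeries K := PowerSeries.mk fun n => (-1) ^ n * (u⁻¹) ^ (n + 1)

lemma gs_mul (u : K) (hu : u ≠ 0) : (PowerSeries.X + PowerSeries.C u) * gs u = 1 := by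
  ext n
  rw [add_mul, map_add]
  cases n with
  | zero => simp [gs, hu]
  | succ n =>
    rw [PowerSeries.coeff_succ_X_mul, PowerSeries.coeff_C_mul, PowerSeries.coeff_one]
    simp only [gs, PowerSeries.coeff_mk]
    simp
    field_simp
    ring

lemma gs_eq (u : K) : gs u = PowerSeries.C u⁻¹ * PowerSeries.rescale (-u⁻¹) (PowerSeries.mk 1) := by
  ext n
  rw [PowerSeries.coeff_C_mul, PowerSeries.coeff_rescale]
  simp only [gs, PowerSeries.coeff_mk, Pi.one_apply]
  rw [neg_pow]; ring

lemma coeff_gs_pow (u : K) (p n : ℕ) :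
    PowerSeries.coeff n (gs u ^ (p + 1)) =
      (-1) ^ n * (u⁻¹) ^ (p + 1 + n) * (Nat.choose (p + n) p : K) := by
  rw [gs_eq, mul_pow, ← map_pow, ← map_pow, PowerSeries.mk_one_pow_eq_mk_choose_add,
    PowerSeries.coeff_C_mul, PowerSeries.coeff_rescale, PowerSeries.coeff_mk]
  rw [neg_pow]; ring

/-- residue at `c` (of order `r`) of `1 / ((t-a)^p (t-b)^q (t-c)^r)`, where `u = c - a`,
`w = c - b`. -/
def res (r : ℕ) (u : K) (p : ℕ) (w : K) (q : ℕ) : K :=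
  PowerSeries.coeff r (PowerSeries.X * (gs u ^ p * gs w ^ q))

lemma res_zero (u : K) (p : ℕ) (w : K) (q : ℕ) : res 0 u p w q = 0 := by
  simp [res]

lemma res_succ (r : ℕ) (u : K) (p : ℕ) (w : K) (q : ℕ) :
    res (r + 1) u p w q = PowerSeries.coeff r (gs u ^ p * gs w ^ q) := by
  rw [res, PowerSeries.coeff_succ_X_mul]

lemma res_symm (r : ℕ) (u : K) (p : ℕ) (w : K) (q : ℕ) :
    res r u p w q = res r w q u p := by
  rw [res, res, mul_comm (gs u ^ p)]

/-- Lowering in the two other poles. -/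
lemma res_rec_other (r : ℕ) (u w : K) (hu : u ≠ 0) (hw : w ≠ 0) (p q : ℕ) :
    (w - u) * res r u (p + 1) w (q + 1) = res r u (p + 1) w q - res r u p w (q + 1) := by
  have h : PowerSeries.C (w - u) * (PowerSeries.X * (gs u ^ (p + 1) * gs w ^ (q + 1))) =
      PowerSeries.X * (gs u ^ (p + 1) * gs w ^ q)
        - PowerSeries.X * (gs u ^ p * gs w ^ (q + 1)) := by
    have h1 := gs_mul u hu
    have h2 := gs_mul w hw
    rw [map_sub, pow_succ, pow_succ]
    linear_combination (PowerSeries.X * gs u ^ p * gs u * gs w ^ q) * h2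
      - (PowerSeries.X * gs u ^ p * gs w ^ q * gs w) * h1
  have := congrArg (PowerSeries.coeff r) h
  rw [PowerSeries.coeff_C_mul, map_sub] at this
  exact this

/-- Lowering in the pole itself and another one. -/
lemma res_rec_own (r : ℕ) (u w : K) (hu : u ≠ 0) (p q : ℕ) :
    u * res (r + 1) u (p + 1) w q = res (r + 1) u p w q - res r u (p + 1) w q := by
  have h : PowerSeries.C u * (gs u ^ (p + 1) * gs w ^ q) =
      gs u ^ p * gs w ^ q - PowerSeries.X * (gs u ^ (p + 1) * gs w ^ q) := by
    have h1 := gs_mul u hu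
    rw [pow_succ]
    linear_combination (gs u ^ p * gs w ^ q) * h1
  have := congrArg (PowerSeries.coeff r) h
  rw [PowerSeries.coeff_C_mul, map_sub] at this
  rw [res_succ, res_succ, res]
  exact this

/-- The residue at `a` of `1 / ((t-a)^p (t-b)^q (t-c)^r)`. -/
def V (a : K) (p : ℕ) (b : K) (q : ℕ) (c : K) (r : ℕ) : K := res p (a - b) q (a - c) r

lemma V_zero (a : K) (b : K) (q : ℕ) (c : K) (r : ℕ) : V a 0 b q c r = 0 := res_zero _ _ _ _

lemma V_symm (a : K) (p : ℕ) (b : K) (q : ℕ) (c : K) (r : ℕ) :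
    V a p b q c r = V a p c r b q := res_symm _ _ _ _ _

lemma V_own (a b c : K) (hab : a ≠ b) (p q r : ℕ) :
    (a - b) * V a (p + 1) b (q + 1) c r = V a (p + 1) b q c r - V a p b (q + 1) c r :=
  res_rec_own _ _ _ (sub_ne_zero.mpr hab) _ _

lemma V_other (a b c : K) (hac : a ≠ c) (hbc : b ≠ c) (p q r : ℕ) :
    (a - b) * V c r a (p + 1) b (q + 1) = V c r a (p + 1) b q - V c r a p b (q + 1) := by
  have := res_rec_other r (c - a) (c - b) (sub_ne_zero.mpr hac.symm) (sub_ne_zero.mpr hbc.symm) p q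
  unfold V
  linear_combination this

/-- Sum of the residues. -/
def sumV (a : K) (p : ℕ) (b : K) (q : ℕ) (c : K) (r : ℕ) : K :=
  V a p b q c r + V b q c r a p + V c r a p b q

lemma sumV_cyc (a : K) (p : ℕ) (b : K) (q : ℕ) (c : K) (r : ℕ) :
    sumV a p b q c r = sumV b q c r a p := by
  unfold sumV; ring

lemma sumV_rec (a b c : K) (hab : a ≠ b) (hac : a ≠ c) (hbc : b ≠ c) (p q r : ℕ) :
    (a - b) * sumV a (p + 1) b (q + 1) c r = sumV a (p + 1) b q c r - sumV a p b (q + 1) c r := by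
  have h1 := V_own a b c hab p q r
  have h2 := V_own b a c hab.symm q p r
  have h3 := V_other a b c hac hbc p q r
  rw [V_symm b, V_symm b (q + 1) a, V_symm b q a] at h2
  unfold sumV
  linear_combination h1 - h2 + h3

lemma V_self (a b c : K) (p : ℕ) : V a (p + 2) b 0 c 0 = 0 := by
  rw [V, res_succ]; simp [PowerSeries.coeff_one]

lemma V_one_one (a b c : K) : V a 1 b 1 c 0 = (a - b)⁻¹ := by
  rw [V, res_succ]
  simp [gs]

lemma sumV_single (a b c : K) (p : ℕ) : sumV a (p + 2) b 0 c 0 = 0 := by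
  simp [sumV, V_zero, V_self]

lemma sumV_one_one (a b c : K) (hab : a ≠ b) : sumV a 1 b 1 c 0 = 0 := by
  rw [sumV, V_zero, V_symm b, V_one_one, V_one_one, ← neg_sub a b, inv_neg]; ring

lemma sumV_eq_zero : ∀ (n : ℕ) (a b c : K) (p q r : ℕ), a ≠ b → a ≠ c → b ≠ c →
    p + q + r = n + 2 → sumV a p b q c r = 0 := by
  intro n
  induction n with
  | zero =>
    intro a b c p q r hab hac hbc h
    rcases p with _ | _ | p
    · rcases q with _ | _ | q
      · obtain rfl : r = 2 := by omega
        rw [sumV_cyc, sumV_cyc]; exact sumV_single _ _ _ _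
      · obtain rfl : r = 1 := by omega
        rw [sumV_cyc]; exact sumV_one_one _ _ _ hbc
      · obtain rfl : r = 0 := by omega
        obtain rfl : q = 0 := by omega
        rw [sumV_cyc]; exact sumV_single _ _ _ _
    · rcases q with _ | q
      · obtain rfl : r = 1 := by omega
        rw [sumV_cyc, sumV_cyc]; exact sumV_one_one _ _ _ hac.symm
      · obtain rfl : q = 0 := by omega
        obtain rfl : r = 0 := by omega
        exact sumV_one_one _ _ _ hab
    · obtain rfl : q = 0 := by omega
      obtain rfl : r = 0 := by omega
      exact sumV_single _ _ _ _
  | succ n ih =>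
    -- if two of the exponents are positive
    have key : ∀ (a b c : K) (p q r : ℕ), a ≠ b → a ≠ c → b ≠ c →
        (p + 1) + (q + 1) + r = n + 1 + 2 → sumV a (p + 1) b (q + 1) c r = 0 := by
      intro a b c p q r hab hac hbc h
      have h1 := sumV_rec a b c hab hac hbc p q r
      rw [ih a b c (p + 1) q r hab hac hbc (by omega),
        ih a b c p (q + 1) r hab hac hbc (by omega), sub_zero] at h1
      exact (mul_eq_zero.mp h1).resolve_left (sub_ne_zero.mpr hab)
    intro a b c p q r hab hac hbc h
    rcases p with _ | p
    · rcases q with _ | q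
      · obtain ⟨r, rfl⟩ : ∃ r', r = r' + 2 := ⟨r - 2, by omega⟩
        rw [sumV_cyc, sumV_cyc]; exact sumV_single _ _ _ _
      · rcases r with _ | r
        · obtain ⟨q, rfl⟩ : ∃ r', q = r' + 1 := ⟨q - 1, by omega⟩
          rw [sumV_cyc]; exact sumV_single _ _ _ _
        · rw [sumV_cyc]; exact key _ _ _ _ _ _ hbc hab.symm hac.symm (by omega)
    · rcases q with _ | q
      · rcases r with _ | r
        · obtain ⟨p, rfl⟩ : ∃ r', p = r' + 1 := ⟨p - 1, by omega⟩
          exact sumV_single _ _ _ _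
        · rw [sumV_cyc, sumV_cyc]; exact key _ _ _ _ _ _ hac.symm hbc.symm hab (by omega)
      · exact key _ _ _ _ _ _ hab hac hbc h

/-! ### Contiguity and nonvanishing -/

lemma gs_deriv (u : K) (hu : u ≠ 0) : PowerSeries.derivative K (gs u) = - gs u ^ 2 := by
  have h := congrArg (PowerSeries.derivative K) (gs_mul u hu)
  simp only [Derivation.leibniz, map_add, smul_eq_mul, Derivation.map_one_eq_zero] at h
  have hX : PowerSeries.derivative K (PowerSeries.X : PowerSeries K) = 1 := by
    simp
  have hC : PowerSeries.derivative K (PowerSeries.C u) = 0 := by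
    simp
  rw [hX, hC] at h
  have h1 := gs_mul u hu
  linear_combination (gs u) * h - (PowerSeries.derivative K (gs u)) * h1

lemma coeff_X_mul_deriv (k : PowerSeries K) (n : ℕ) :
    PowerSeries.coeff n (PowerSeries.X * PowerSeries.derivative K k) =
      n * PowerSeries.coeff n k := by
  cases n with
  | zero => simp
  | succ n => rw [PowerSeries.coeff_succ_X_mul]; simp [PowerSeries.coeff_derivative]; ring

lemma gs_pow_deriv (u : K) (hu : u ≠ 0) (n : ℕ) :
    PowerSeries.derivative K (gs u ^ n) = - (n : PowerSeries K) * gs u ^ (n + 1) := by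
  induction n with
  | zero => simp
  | succ n ih =>
    rw [pow_succ, Derivation.leibniz, ih, gs_deriv u hu]
    simp only [smul_eq_mul]
    push_cast
    ring

lemma gs_gs_deriv (u w : K) (hu : u ≠ 0) (hw : w ≠ 0) (p q : ℕ) :
    PowerSeries.derivative K (gs u ^ p * gs w ^ q) =
      - (p : PowerSeries K) * gs u ^ (p + 1) * gs w ^ q
      - (q : PowerSeries K) * gs u ^ p * gs w ^ (q + 1) := by
  rw [Derivation.leibniz, gs_pow_deriv u hu, gs_pow_deriv w hw]
  simp only [smul_eq_mul]
  ring

lemma coeff_natCast_mul' (n k : ℕ) (f : PowerSeries K) :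
    PowerSeries.coeff n ((k : PowerSeries K) * f) = k * PowerSeries.coeff n f := by
  have : (k : PowerSeries K) = PowerSeries.C (k : K) := by simp
  rw [this, PowerSeries.coeff_C_mul]

lemma three_own (a b c : K) (hab : a ≠ b) (hac : a ≠ c) (p q r : ℕ) :
    ((p + 1 : ℕ) : K) * (a - b) * (a - c) * V a (p + 2) b (q + 1) c (r + 1)
    + (((p + 1 : ℕ) : K) * ((a - b) + (a - c)) + q * (a - c) + r * (a - b)) *
        V a (p + 1) b (q + 1) c (r + 1)
    + ((p + 1 : ℕ) + q + r : K) * V a p b (q + 1) c (r + 1) = 0 := by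
  have hu := sub_ne_zero.mpr hab
  have hw := sub_ne_zero.mpr hac
  set u := a - b with hudef
  set w := a - c with hwdef
  set g := gs u ^ (q + 1) * gs w ^ (r + 1) with hg
  set k := gs u ^ q * gs w ^ r with hk
  have h2 : V a (p + 2) b (q + 1) c (r + 1) = PowerSeries.coeff (p + 1) g := by
    rw [V, res_succ]
  have h1 : V a (p + 1) b (q + 1) c (r + 1) = PowerSeries.coeff (p + 1) (PowerSeries.X * g) := by
    rw [V, res]
  have h0 : V a p b (q + 1) c (r + 1) =
      PowerSeries.coeff (p + 1) (PowerSeries.X * (PowerSeries.X * g)) := by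
    rw [V, res, PowerSeries.coeff_succ_X_mul]
  have e : PowerSeries.C (((p + 1 : ℕ) : K) * u * w) * g
      + PowerSeries.C (((p + 1 : ℕ) : K) * (u + w) + q * w + r * u) * (PowerSeries.X * g)
      + PowerSeries.C ((p + 1 : ℕ) + q + r : K) * (PowerSeries.X * (PowerSeries.X * g))
      = ((p + 1 : ℕ) : PowerSeries K) * k - PowerSeries.X * PowerSeries.derivative K k := by
    rw [hk, gs_gs_deriv u w hu hw, hg]
    have e1 := gs_mul u hu
    have e2 := gs_mul w hw
    simp only [map_add, map_mul, map_natCast]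
    rw [pow_succ, pow_succ]
    generalize PowerSeries.C u = U at *
    generalize PowerSeries.C w = W at *
    generalize (PowerSeries.X : PowerSeries K) = X at *
    generalize gs u = g1 at *
    generalize gs w = g2 at *
    generalize ((p + 1 : ℕ) : PowerSeries K) = P
    linear_combination (P * g1 ^ q * g2 ^ r * ((X + W) * g2) + (r : PowerSeries K) * X * g1 ^ q * g2 ^ r * g2) * e1 +
      (P * g1 ^ q * g2 ^ r + (q : PowerSeries K) * X * g1 ^ q * g1 * g2 ^ r) * e2
  have := congrArg (PowerSeries.coeff (p + 1)) e
  rw [map_add, map_add, map_sub, PowerSeries.coeff_C_mul, PowerSeries.coeff_C_mul,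
    PowerSeries.coeff_C_mul, coeff_natCast_mul', coeff_X_mul_deriv, sub_self] at this
  rw [h2, h1, h0]
  exact this

lemma three_other (a b c : K) (hac : a ≠ c) (hbc : b ≠ c) (p q r : ℕ) :
    ((p + 1 : ℕ) : K) * (a - b) * (a - c) * V c (r + 1) a (p + 2) b (q + 1)
    + (((p + 1 : ℕ) : K) * ((a - b) + (a - c)) + q * (a - c) + r * (a - b)) *
        V c (r + 1) a (p + 1) b (q + 1)
    + ((p + 1 : ℕ) + q + r : K) * V c (r + 1) a p b (q + 1) = 0 := by
  have hu := sub_ne_zero.mpr hac.symm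
  have hw := sub_ne_zero.mpr hbc.symm
  have e3 : a - b = (c - b) - (c - a) := by ring
  have e4 : a - c = - (c - a) := by ring
  rw [e3, e4]
  simp only [V, res_succ]
  set u := c - a with hudef
  set w := c - b with hwdef
  set k := gs u ^ (p + 1) * gs w ^ q with hk
  have e : PowerSeries.C (((p + 1 : ℕ) : K) * (w - u) * (-u)) * (gs u ^ (p + 2) * gs w ^ (q + 1))
      + PowerSeries.C (((p + 1 : ℕ) : K) * ((w - u) + -u) + q * (-u) + r * (w - u)) *
          (gs u ^ (p + 1) * gs w ^ (q + 1))
      + PowerSeries.C ((p + 1 : ℕ) + q + r : K) * (gs u ^ p * gs w ^ (q + 1))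
      = (r : PowerSeries K) * k - PowerSeries.X * PowerSeries.derivative K k := by
    rw [hk, gs_gs_deriv u w hu hw]
    have e1 := gs_mul u hu
    have e2 := gs_mul w hw
    simp only [map_add, map_mul, map_natCast, map_sub, map_neg]
    rw [pow_succ (gs w), pow_succ (gs u) (p + 1), pow_succ (gs u) p]
    generalize PowerSeries.C u = U at *
    generalize PowerSeries.C w = W at *
    generalize (PowerSeries.X : PowerSeries K) = X at *
    generalize gs u = g1 at *
    generalize gs w = g2 at *
    generalize ((p + 1 : ℕ) : PowerSeries K) = P
    have hU : U * g1 = 1 - X * g1 := by linear_combination e1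
    have hW : W * g2 = 1 - X * g2 := by linear_combination e2
    linear_combination (g1^p*g2^q)*(P*(-g1*W*g2 + g2*(U*g1+1-X*g1) - 2*g2) - (q:PowerSeries K)*g2 - (r:PowerSeries K)*g2) * hU + (g1^p*g2^q)*(P*(-g1*(1-X*g1)+g1)+(r:PowerSeries K)*g1)*hW
  have := congrArg (PowerSeries.coeff r) e
  rw [map_add, map_add, map_sub, PowerSeries.coeff_C_mul, PowerSeries.coeff_C_mul,
    PowerSeries.coeff_C_mul, coeff_natCast_mul', coeff_X_mul_deriv, sub_self] at this
  exact this

/-- The minor `V(p+1,q,r) ∧ V(p,q,r)`. -/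
def mnr (a : K) (p : ℕ) (b : K) (q : ℕ) (c : K) (r : ℕ) : K :=
  V a (p + 1) b q c r * V b q c r a p - V b q c r a (p + 1) * V a p b q c r

lemma mnr_step [CharZero K] (a b c : K) (hab : a ≠ b) (hac : a ≠ c) (hbc : b ≠ c) (p q r : ℕ)
    (h : mnr a p b (q + 1) c (r + 1) ≠ 0) : mnr a (p + 1) b (q + 1) c (r + 1) ≠ 0 := by
  have h1 := three_own a b c hab hac p q r
  have h2 := three_other a c b hab hbc.symm p r q
  rw [V_symm b, V_symm b (q + 1) a (p + 1), V_symm b (q + 1) a p] at h2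
  have key : ((p + 1 : ℕ) : K) * (a - b) * (a - c) * mnr a (p + 1) b (q + 1) c (r + 1) =
      ((p + 1 : ℕ) + q + r : K) * mnr a p b (q + 1) c (r + 1) := by
    unfold mnr
    linear_combination (V b (q + 1) c (r + 1) a (p + 1)) * h1
      - (V a (p + 1) b (q + 1) c (r + 1)) * h2
  intro h0
  rw [h0, mul_zero] at key
  have : ((p + 1 : ℕ) + q + r : K) ≠ 0 := by
    have : ((p + 1 : ℕ) + q + r : K) = ((p + 1 + q + r : ℕ) : K) := by push_cast; ring
    rw [this]
    exact Nat.cast_ne_zero.mpr (by omega)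
  exact (mul_ne_zero this h) key.symm

lemma mnr_cyc (a b c : K) (hab : a ≠ b) (hac : a ≠ c) (hbc : b ≠ c) (p q r : ℕ) :
    mnr a p b (q + 1) c (r + 1) = mnr b q c (r + 1) a (p + 1) := by
  have h1 := V_own a b c hab p q (r + 1)
  have h2 := V_own b a c hab.symm q p (r + 1)
  rw [V_symm b, V_symm b (q + 1) a, V_symm b q a] at h2
  have s1 := sumV_eq_zero (p + q + r + 1) a b c (p + 1) (q + 1) (r + 1) hab hac hbc (by omega)
  have s2 := sumV_eq_zero (p + q + r) a b c (p + 1) q (r + 1) hab hac hbc (by omega)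
  unfold sumV at s1 s2
  have hab' := sub_ne_zero.mpr hab
  apply mul_left_cancel₀ hab'
  unfold mnr
  linear_combination (a-b)*V b q c (r+1) a (p+1)*s1 - (a-b)*V b (q+1) c (r+1) a (p+1)*s2 - (a-b)*V a (p+1) b (q+1) c (r+1)*h2 - (a-b)*V b (q+1) c (r+1) a (p+1)*h1

lemma V_111 (a b c : K) : V a 1 b 1 c 1 = (a - b)⁻¹ * (a - c)⁻¹ := by
  rw [V, res_succ]
  simp [gs]

lemma V_110 (a b c : K) : V a 1 b 1 c 0 = (a - b)⁻¹ := by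
  rw [V, res_succ]
  simp [gs]

lemma mnr_ne_zero [CharZero K] (a b c : K) (hab : a ≠ b) (hac : a ≠ c) (hbc : b ≠ c) (p q r : ℕ) :
    mnr a p b (q + 1) c (r + 1) ≠ 0 := by
  induction p with
  | succ p ih => exact mnr_step a b c hab hac hbc p q r ih
  | zero =>
    rw [mnr_cyc a b c hab hac hbc]
    induction q with
    | succ q ih => exact mnr_step b c a hbc hab.symm hac.symm q r 0 ih
    | zero =>
      rw [mnr_cyc b c a hbc hab.symm hac.symm]
      induction r with
      | succ r ih => exact mnr_step c a b hac.symm hbc.symm hab r 0 0 ih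
      | zero =>
        simp only [mnr, V_zero, zero_add, mul_zero, sub_zero]
        rw [V_111, V_110]
        have h1 := sub_ne_zero.mpr hab
        have h2 := sub_ne_zero.mpr hac.symm
        have h3 := sub_ne_zero.mpr hbc.symm
        positivity

end Pade
end TailBound

namespace TailBound
noncomputable section Local

variable {K : Type*} [Field K]

/-- `E = 2`, or `f` is non-archimedean and `E = 1`. -/
def Tame (f : AbsoluteValue K ℝ) (E : ℝ) : Prop := E = 2 ∨ (E = 1 ∧ IsNonarchimedean f)

lemma Tame.one_le {f : AbsoluteValue K ℝ} {E : ℝ} (h : Tame f E) : 1 ≤ E := by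
  rcases h with h | h
  · rw [h]; norm_num
  · rw [h.1]

lemma Tame.add_le {f : AbsoluteValue K ℝ} {E : ℝ} (h : Tame f E) (x y : K) {B : ℝ}
    (hx : f x ≤ B) (hy : f y ≤ B) : f (x + y) ≤ E * B := by
  rcases h with h | h
  · rw [h]; linarith [f.add_le x y]
  · rw [h.1, one_mul]; exact (h.2 x y).trans (max_le hx hy)

lemma sum_choose (p q r : ℕ) :
    ∑ ij ∈ Finset.HasAntidiagonal.antidiagonal p, (Nat.choose (q + ij.1) q * Nat.choose (r + ij.2) r : ℝ)
      = Nat.choose (q + r + 1 + p) (q + r + 1) := by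
  have h : (PowerSeries.mk 1 : PowerSeries ℝ) ^ (q + 1) * PowerSeries.mk 1 ^ (r + 1)
      = PowerSeries.mk 1 ^ (q + r + 1 + 1) := by rw [← pow_add]; congr 1; ring
  have := congrArg (PowerSeries.coeff p) h
  rw [PowerSeries.coeff_mul, PowerSeries.mk_one_pow_eq_mk_choose_add,
    PowerSeries.mk_one_pow_eq_mk_choose_add, PowerSeries.mk_one_pow_eq_mk_choose_add] at this
  simpa using this

lemma nonarch_natCast {f : AbsoluteValue K ℝ} (h : IsNonarchimedean f) (n : ℕ) : f (n : K) ≤ 1 :=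
  h.apply_natCast_le_one

lemma abv_natCast_le (f : AbsoluteValue K ℝ) (n : ℕ) : f (n : K) ≤ n := by
  induction n with
  | zero => simp
  | succ n ih => push_cast; linarith [f.add_le n 1, f.map_one]

lemma V_bound (f : AbsoluteValue K ℝ) {E : ℝ} (hE : Tame f E) (a b c : K) (hab : a ≠ b)
    (hac : a ≠ c) (p q r : ℕ) {m : ℝ} (h1 : f (a - b) ≤ m) (h2 : f (a - c) ≤ m) :
    f (V a (p + 1) b (q + 1) c (r + 1)) * (f (a - b) ^ (p + q + 1) * f (a - c) ^ (p + r + 1))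
      ≤ E ^ (p + q + r + 1) * m ^ p := by
  have hu : a - b ≠ 0 := sub_ne_zero.mpr hab
  have hw : a - c ≠ 0 := sub_ne_zero.mpr hac
  have hm : 0 ≤ m := (f.nonneg _).trans h1
  have key : V a (p + 1) b (q + 1) c (r + 1) * ((a - b) ^ (p + q + 1) * (a - c) ^ (p + r + 1)) =
      ∑ ij ∈ Finset.HasAntidiagonal.antidiagonal p, ((Nat.choose (q + ij.1) q * Nat.choose (r + ij.2) r : ℕ) : K)
        * ((-1) ^ p * (a - b) ^ ij.2 * (a - c) ^ ij.1) := by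
    rw [V, res_succ, PowerSeries.coeff_mul, Finset.sum_mul]
    refine Finset.sum_congr rfl fun ij hij => ?_
    rw [Finset.HasAntidiagonal.mem_antidiagonal] at hij
    rw [coeff_gs_pow, coeff_gs_pow, ← hij]
    push_cast
    have e1 : (a - b) ^ (ij.1 + ij.2 + q + 1) = (a - b) ^ (q + 1 + ij.1) * (a - b) ^ ij.2 := by
      rw [← pow_add]; congr 1; ring
    have e2 : (a - c) ^ (ij.1 + ij.2 + r + 1) = (a - c) ^ (r + 1 + ij.2) * (a - c) ^ ij.1 := by
      rw [← pow_add]; congr 1; ring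
    rw [e1, e2, inv_pow, inv_pow]
    field_simp
    ring
  have hterm : ∀ ij ∈ Finset.HasAntidiagonal.antidiagonal p,
      f ((-1) ^ p * (a - b) ^ ij.2 * (a - c) ^ ij.1) ≤ m ^ p := by
    intro ij hij
    rw [Finset.HasAntidiagonal.mem_antidiagonal] at hij
    rw [map_mul, map_mul, map_pow, map_pow, map_pow, f.map_neg, f.map_one, one_pow, one_mul,
      ← hij, pow_add, mul_comm]
    have := f.nonneg (a - b)
    have := f.nonneg (a - c)
    gcongr
  rw [← map_pow, ← map_pow, ← map_mul, ← map_mul, key]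
  rcases hE with hE | hE
  · rw [hE]
    calc _ ≤ ∑ ij ∈ Finset.HasAntidiagonal.antidiagonal p, f (((Nat.choose (q + ij.1) q * Nat.choose (r + ij.2) r : ℕ) : K)
        * ((-1) ^ p * (a - b) ^ ij.2 * (a - c) ^ ij.1)) := f.sum_le _ _
      _ ≤ ∑ ij ∈ Finset.HasAntidiagonal.antidiagonal p, (Nat.choose (q + ij.1) q * Nat.choose (r + ij.2) r : ℝ) * m ^ p := by
        refine Finset.sum_le_sum fun ij hij => ?_
        rw [map_mul]
        refine mul_le_mul ((abv_natCast_le f _).trans (by push_cast; rfl)) (hterm ij hij) (f.nonneg _) (by positivity)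
      _ = Nat.choose (q + r + 1 + p) (q + r + 1) * m ^ p := by rw [← Finset.sum_mul, sum_choose]
      _ ≤ _ := by
        gcongr
        have := Nat.choose_le_two_pow (q + r + 1 + p) (q + r + 1)
        have e : p + q + r + 1 = q + r + 1 + p := by ring
        rw [e]
        exact_mod_cast this
  · rw [hE.1, one_pow, one_mul]
    have hn := hE.2
    refine hn.apply_sum_le_sup (s := Finset.HasAntidiagonal.antidiagonal p) ⟨(0, p), by simp⟩ |>.trans ?_
    refine Finset.sup'_le _ _ fun ij hij => ?_
    rw [map_mul]
    calc _ ≤ 1 * m ^ p := by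
          refine mul_le_mul (nonarch_natCast hn _) (hterm ij hij) (f.nonneg _) (by positivity)
      _ = _ := one_mul _

/-- coordinates -/
def Xc (x : K) : Fin 3 → K := ![x, 1 - x, -1]

/-- maximum of the absolute values of the coordinates. -/
def mm (f : AbsoluteValue K ℝ) (x : K) : ℝ := max (f x) (max (f (1 - x)) 1)

def rr (f : AbsoluteValue K ℝ) (x : K) : ℝ :=
  3 * Real.log (mm f x) - Real.log (f x) - Real.log (f (1 - x))

/-- index of the smallest coordinate -/
def ty (f : AbsoluteValue K ℝ) (x : K) : Fin 3 :=
  if f x ≤ f (1 - x) ∧ f x ≤ 1 then 0 else if f (1 - x) ≤ 1 then 1 else 2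

lemma one_le_mm (f : AbsoluteValue K ℝ) (x : K) : 1 ≤ mm f x := by simp [mm]

lemma mm_pos (f : AbsoluteValue K ℝ) (x : K) : 0 < mm f x := zero_lt_one.trans_le (one_le_mm f x)

lemma Xc_le (f : AbsoluteValue K ℝ) (x : K) (i : Fin 3) : f (Xc x i) ≤ mm f x := by
  fin_cases i <;> simp [Xc, mm]

lemma Xc_ne (x : K) (h0 : x ≠ 0) (h1 : x ≠ 1) (i : Fin 3) : Xc x i ≠ 0 := by
  fin_cases i <;> simp [Xc, h0, sub_ne_zero, h1.symm]

lemma ty_le (f : AbsoluteValue K ℝ) (x : K) (j : Fin 3) : f (Xc x (ty f x)) ≤ f (Xc x j) := by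
  unfold ty
  split_ifs with h1 h2
  · fin_cases j <;> simp [Xc, h1.1, h1.2]
  · have : f (1 - x) ≤ f x := by
      by_contra h; push Not at h
      exact h1 ⟨h.le, h.le.trans h2⟩
    fin_cases j <;> simp [Xc, h2, this]
  · push Not at h2
    have : 1 ≤ f x := by
      by_contra h; push Not at h
      exact h1 ⟨h.le.trans h2.le, h.le⟩
    fin_cases j <;> simp [Xc, h2.le, this]

lemma Xc_sum (x : K) (i : Fin 3) : Xc x i + Xc x (i + 1) + Xc x (i + 2) = 0 := by
  fin_cases i <;> simp [Xc] <;> ring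

lemma Xc_prod (f : AbsoluteValue K ℝ) (x : K) (i : Fin 3) :
    f (Xc x i) * f (Xc x (i + 1)) * f (Xc x (i + 2)) = f x * f (1 - x) := by
  fin_cases i <;> simp [Xc] <;> ring

lemma mm_eq (f : AbsoluteValue K ℝ) (x : K) : ∃ j, mm f x = f (Xc x j) := by
  unfold mm
  rcases max_choice (f x) (max (f (1 - x)) 1) with h | h <;> rw [h]
  · exact ⟨0, by simp [Xc]⟩
  · rcases max_choice (f (1 - x)) 1 with h | h <;> rw [h]
    · exact ⟨1, by simp [Xc]⟩
    · exact ⟨2, by simp [Xc]⟩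

lemma mm_le_mid (f : AbsoluteValue K ℝ) {E : ℝ} (hE : Tame f E) (x : K) (j : Fin 3)
    (hj : j ≠ ty f x) : mm f x ≤ E * f (Xc x j) := by
  have aux : ∀ k l, k ≠ j → l ≠ j → k ≠ l → f (Xc x k) ≤ f (Xc x j) → f (Xc x l) ≤ E * f (Xc x j) := by
    intro k l h1 h2 h3 h4
    have hs : Xc x l = - (Xc x k + Xc x j) := by
      have := Xc_sum x 0
      simp only [Fin.isValue, zero_add] at this
      fin_cases k <;> fin_cases l <;> fin_cases j <;> simp at h1 h2 h3 ⊢ <;>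
        linear_combination this
    rw [hs, f.map_neg]
    exact hE.add_le _ _ h4 le_rfl
  have hE1 := hE.one_le
  obtain ⟨l, hl⟩ := mm_eq f x
  rw [hl]
  by_cases hlj : l = j
  · subst hlj
    nlinarith [f.nonneg (Xc x l)]
  by_cases hlt : l = ty f x
  · have := ty_le f x j
    rw [← hlt] at this
    nlinarith [f.nonneg (Xc x j)]
  · exact aux (ty f x) l hj.symm hlj (Ne.symm hlt) (ty_le f x j)

lemma exp_rr (f : AbsoluteValue K ℝ) (x : K) (h0 : x ≠ 0) (h1 : x ≠ 1) :
    f x * f (1 - x) = mm f x ^ 3 * Real.exp (- rr f x) := by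
  have hm := mm_pos f x
  have p0 := f.pos h0
  have p1 := f.pos (sub_ne_zero.mpr h1.symm)
  have : - rr f x = Real.log (f x) + Real.log (f (1 - x)) - 3 * Real.log (mm f x) := by
    unfold rr; ring
  rw [this, Real.exp_sub, Real.exp_add, Real.exp_log p0, Real.exp_log p1]
  have : Real.exp (3 * Real.log (mm f x)) = mm f x ^ 3 := by
    rw [mul_comm, Real.exp_mul, Real.exp_log hm]; norm_cast
  rw [this]; field_simp

lemma rr_nonneg (f : AbsoluteValue K ℝ) (x : K) (h0 : x ≠ 0) (h1 : x ≠ 1) : 0 ≤ rr f x := by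
  have hm := one_le_mm f x
  have p0 := f.pos h0
  have p1 := f.pos (sub_ne_zero.mpr h1.symm)
  have h2 : Real.log (f x) ≤ Real.log (mm f x) := Real.log_le_log p0 (by simp [mm])
  have h3 : Real.log (f (1 - x)) ≤ Real.log (mm f x) := Real.log_le_log p1 (by simp [mm])
  have h4 := Real.log_nonneg hm
  unfold rr; linarith

lemma fin3_ne1 (i : Fin 3) : i + 1 ≠ i := by fin_cases i <;> decide
lemma fin3_ne2 (i : Fin 3) : i + 2 ≠ i := by fin_cases i <;> decide

lemma fin3_cases : ∀ i l : Fin 3, l = i ∨ l = i + 1 ∨ l = i + 2 := by decide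

/-- the smallest coordinate is small -/
lemma kap_le (f : AbsoluteValue K ℝ) {E : ℝ} (hE : Tame f E) (x : K) (h0 : x ≠ 0) (h1 : x ≠ 1) :
    f (Xc x (ty f x)) ≤ mm f x * (E * Real.exp (- rr f x)) := by
  set i := ty f x with hi
  have hp := Xc_prod f x i
  rw [exp_rr f x h0 h1] at hp
  have hm := mm_pos f x
  have a1 := mm_le_mid f hE x (i + 1) (fin3_ne1 i)
  have a2 := mm_le_mid f hE x (i + 2) (fin3_ne2 i)
  have hq : mm f x ^ 2 ≤ E * (f (Xc x (i + 1)) * f (Xc x (i + 2))) := by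
    obtain ⟨l, hl⟩ := mm_eq f x
    have hE1 := hE.one_le
    have n1 := f.nonneg (Xc x (i + 1))
    have n2 := f.nonneg (Xc x (i + 2))
    have n0 := f.nonneg (Xc x i)
    have b1 := ty_le f x (i + 1)
    have c1 := fin3_cases i l
    rcases c1 with c | c | c
    · have : mm f x ≤ f (Xc x (i + 1)) := by rw [hl, c]; exact b1
      nlinarith
    · rw [← c, ← hl]; nlinarith
    · rw [← c, ← hl]; nlinarith
  have n0 := f.nonneg (Xc x i)
  have : f (Xc x i) * mm f x ^ 2 ≤ E * (mm f x ^ 3 * Real.exp (-rr f x)) := by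
    rw [← hp]; nlinarith
  have h2 : 0 < mm f x ^ 2 := by positivity
  refine le_of_mul_le_mul_right ?_ h2
  linarith

end Local
end TailBound

namespace TailBound
noncomputable section Local2

variable {K : Type*} [Field K]

/-- The Padé approximation vector. -/
def pad (x : K) (p q r : ℕ) : Fin 3 → K :=
  ![x ^ (q + r + 1) * (1 - x) ^ (p + r + 1) * V 0 (p + 1) 1 (q + 1) (1 - x) (r + 1),
    x ^ (q + r + 1) * (1 - x) ^ (p + r + 1) * V 1 (q + 1) (1 - x) (r + 1) 0 (p + 1),
    x ^ (q + r + 1) * (1 - x) ^ (p + r + 1) * V (1 - x) (r + 1) 0 (p + 1) 1 (q + 1)]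

lemma one_ne_one_sub (x : K) (h0 : x ≠ 0) : (1 : K) ≠ 1 - x := by
  intro h; apply h0; linear_combination h

lemma pad_sum (x : K) (h0 : x ≠ 0) (h1 : x ≠ 1) (p q r : ℕ) (i : Fin 3) :
    pad x p q r i + pad x p q r (i + 1) + pad x p q r (i + 2) = 0 := by
  have := sumV_eq_zero (p + q + r + 1) (0 : K) 1 (1 - x) (p + 1) (q + 1) (r + 1) zero_ne_one
    (sub_ne_zero.mpr h1.symm).symm (one_ne_one_sub x h0) (by omega)
  unfold sumV at this
  fin_cases i <;> simp [pad] <;>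
    linear_combination (x ^ (q + r + 1) * (1 - x) ^ (p + r + 1)) * this

lemma pad_le (f : AbsoluteValue K ℝ) {E : ℝ} (hE : Tame f E) (x : K) (h0 : x ≠ 0) (h1 : x ≠ 1)
    (p q r M : ℕ) (hM1 : M ≤ q + r + 1) (hM2 : M ≤ p + r + 1) (hM3 : M ≤ p + q + 1) (i : Fin 3)
    {κ : ℝ} (hκ1 : κ ≤ 1) (hκ0 : 0 ≤ κ) (hκ : f (Xc x i) ≤ mm f x * κ) :
    f (pad x p q r i) ≤ E ^ (p + q + r + 1) * mm f x ^ (p + q + r + 1) * κ ^ M := by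
  have hm := mm_pos f x
  have l0 := Xc_le f x 0
  have l1 := Xc_le f x 1
  have l2 := Xc_le f x 2
  simp [Xc] at l0 l1 l2
  have e1 : f (0 - 1 : K) = 1 := by rw [zero_sub, f.map_neg, f.map_one]
  have e1' : f (1 - 0 : K) = 1 := by rw [sub_zero, f.map_one]
  have e2 : f (0 - (1 - x)) = f (1 - x) := by rw [zero_sub, f.map_neg]
  have e2' : f ((1 - x) - 0) = f (1 - x) := by rw [sub_zero]
  have e3 : f (1 - (1 - x)) = f x := by rw [sub_sub_cancel]
  have e3' : f ((1 - x) - 1) = f x := by rw [f.map_sub, sub_sub_cancel]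
  have hE1 := hE.one_le
  have gen : ∀ (A : K) (a e : ℕ), a + e = p + q + r + 1 → M ≤ e →
      f A ≤ f (Xc x i) ^ e * (E ^ (p + q + r + 1) * mm f x ^ a) →
      f A ≤ E ^ (p + q + r + 1) * mm f x ^ (p + q + r + 1) * κ ^ M := by
    intro A a e hae hMe hA
    have n0 := f.nonneg (Xc x i)
    calc f A ≤ f (Xc x i) ^ e * (E ^ (p + q + r + 1) * mm f x ^ a) := hA
      _ ≤ (mm f x * κ) ^ e * (E ^ (p + q + r + 1) * mm f x ^ a) := by gcongr
      _ = E ^ (p + q + r + 1) * mm f x ^ (p + q + r + 1) * κ ^ e := by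
        have : mm f x ^ (p + q + r + 1) = mm f x ^ a * mm f x ^ e := by rw [← hae, pow_add]
        rw [this]; ring
      _ ≤ _ := by
        refine mul_le_mul_of_nonneg_left ?_ (by positivity)
        exact pow_le_pow_of_le_one hκ0 hκ1 hMe
  have hx1 : (1 : K) - x ≠ 0 := sub_ne_zero.mpr h1.symm
  have p0 := f.nonneg x
  have p1 := f.nonneg (1 - x)
  have n01 : (0 : K) ≠ 1 - x := (sub_ne_zero.mpr h1.symm).symm
  have n11 : (1 : K) ≠ 1 - x := one_ne_one_sub x h0
  fin_cases i
  · refine gen _ p (q + r + 1) (by ring) hM1 ?_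
    have := V_bound f hE 0 1 (1 - x) zero_ne_one n01 p q r (m := mm f x) (by rw [e1]; exact l2) (by rw [e2]; exact l1)
    rw [e1, e2, one_pow, one_mul] at this
    simp only [pad, Xc, map_mul, map_pow, Fin.zero_eta, Matrix.cons_val_zero]
    have h2 : 0 ≤ f x ^ (q + r + 1) := by positivity
    nlinarith
  · refine gen _ q (p + r + 1) (by ring) hM2 ?_
    have := V_bound f hE 1 (1 - x) 0 n11 one_ne_zero q r p (m := mm f x) (by rw [e3]; exact l0) (by rw [e1']; exact l2)
    rw [e1', e3, one_pow, mul_one] at this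
    have e4 : q + r + p + 1 = p + q + r + 1 := by ring
    rw [e4] at this
    simp only [pad, Xc, map_mul, map_pow, Fin.mk_one, Matrix.cons_val_one, Matrix.cons_val_zero]
    have h2 : 0 ≤ f (1 - x) ^ (p + r + 1) := by positivity
    nlinarith
  · refine gen _ r (p + q + 1) (by ring) hM3 ?_
    have := V_bound f hE (1 - x) 0 1 n01.symm n11.symm r p q (m := mm f x) (by rw [e2']; exact l1) (by rw [e3']; exact l0)
    rw [e2', e3'] at this
    have e4 : r + p + q + 1 = p + q + r + 1 := by ring
    have e5 : r + p + 1 = p + r + 1 := by ring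
    have e6 : r + q + 1 = q + r + 1 := by ring
    rw [e4, e5, e6] at this
    simp only [pad, Xc, map_mul, map_pow, Fin.reduceFinMk, Matrix.cons_val, map_neg_eq_map, map_one, one_pow]
    linarith

/-- the determinant -/
def DD (x y : K) (p q r : ℕ) : K := pad x p q r 0 * Xc y 1 - pad x p q r 1 * Xc y 0

lemma DD_eq (x y : K) (h0 : x ≠ 0) (h1 : x ≠ 1) (p q r : ℕ) (i : Fin 3) :
    DD x y p q r = pad x p q r i * Xc y (i + 1) - pad x p q r (i + 1) * Xc y i := by
  have s1 := pad_sum x h0 h1 p q r 0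
  have s2 := Xc_sum y 0
  unfold DD
  simp at s1 s2
  fin_cases i
  · simp
  · simp only [Fin.mk_one, Fin.isValue, show (1 + 1 : Fin 3) = 2 from rfl]
    linear_combination pad x p q r 1 * s2 - Xc y 1 * s1 - 2 * pad x p q r 1 * s2 + 2 * Xc y 1 * s1
  · simp only [Fin.reduceFinMk, Fin.isValue, show (2 + 1 : Fin 3) = 0 from rfl]
    linear_combination pad x p q r 0 * s2 - Xc y 0 * s1

lemma DD_ne [CharZero K] (x y : K) (h0 : x ≠ 0) (h1 : x ≠ 1) (N : ℕ) :
    DD x y N N N ≠ 0 ∨ DD x y (N + 1) N N ≠ 0 := by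
  by_contra h
  push Not at h
  obtain ⟨ha, hb⟩ := h
  have hx1 : (1 : K) - x ≠ 0 := sub_ne_zero.mpr h1.symm
  have hmn := mnr_ne_zero (0 : K) 1 (1 - x) zero_ne_one hx1.symm (one_ne_one_sub x h0) (N + 1) N N
  simp only [DD, pad, Xc, Matrix.cons_val_zero, Matrix.cons_val_one] at ha hb
  have c1 : x ^ (N + N + 1) * (1 - x) ^ (N + N + 1) ≠ 0 := by positivity
  have c2 : x ^ (N + N + 1) * (1 - x) ^ (N + 1 + N + 1) ≠ 0 := by positivity
  have ha' : V 0 (N + 1) 1 (N + 1) (1 - x) (N + 1) * (1 - y) - V 1 (N + 1) (1 - x) (N + 1) 0 (N + 1) * y = 0 := by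
    apply mul_left_cancel₀ c1; linear_combination ha
  have hb' : V 0 (N + 1 + 1) 1 (N + 1) (1 - x) (N + 1) * (1 - y) - V 1 (N + 1) (1 - x) (N + 1) 0 (N + 1 + 1) * y = 0 := by
    apply mul_left_cancel₀ c2; linear_combination hb
  apply hmn
  unfold mnr
  linear_combination (V 1 (N + 1) (1 - x) (N + 1) 0 (N + 1) + V 0 (N + 1) 1 (N + 1) (1 - x) (N + 1)) * hb' - (V 1 (N + 1) (1 - x) (N + 1) 0 (N + 1 + 1) + V 0 (N + 1 + 1) 1 (N + 1) (1 - x) (N + 1)) * ha'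

lemma local_bound (f : AbsoluteValue K ℝ) {E : ℝ} (hE : Tame f E) (x y : K) (h0 : x ≠ 0)
    (h1 : x ≠ 1) (k0 : y ≠ 0) (k1 : y ≠ 1)
    (p q r M : ℕ) (hM0 : 1 ≤ M) (hM1 : M ≤ q + r + 1) (hM2 : M ≤ p + r + 1) (hM3 : M ≤ p + q + 1)
    (hty : ty f x = ty f y) :
    f (DD x y p q r) ≤ E ^ (p + q + r + 1 + 1 + M) * mm f x ^ (p + q + r + 1) * mm f y *
      Real.exp (- min (M * rr f x) (rr f y)) := by
  set L := p + q + r + 1 with hL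
  have hmx := mm_pos f x
  have hmy := mm_pos f y
  have hE1 := hE.one_le
  have hE0 : 0 < E := by linarith
  rw [DD_eq x y h0 h1 p q r (ty f x)]
  set i := ty f x with hi
  have kx := kap_le f hE x h0 h1
  have ky := kap_le f hE y k0 k1
  rw [← hty] at ky
  rw [← hi] at kx
  set ex := Real.exp (- min (M * rr f x) (rr f y)) with hex
  have hexp1 : Real.exp (- rr f x) ^ M ≤ ex := by
    rw [← Real.exp_nat_mul, hex]
    apply Real.exp_le_exp.mpr
    have := min_le_left (M * rr f x) (rr f y)
    linarith
  have hexp2 : Real.exp (- rr f y) ≤ ex := by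
    apply Real.exp_le_exp.mpr
    have := min_le_right (M * rr f x) (rr f y)
    linarith
  have hex0 : 0 < ex := Real.exp_pos _
  -- first term
  have t1 : f (pad x p q r i) ≤ E ^ L * mm f x ^ L * (E ^ M * ex) := by
    set κ := f (Xc x i) / mm f x with hκ
    have hκe : f (Xc x i) = mm f x * κ := by rw [hκ]; field_simp
    have hκ1 : κ ≤ 1 := by rw [hκ, div_le_one hmx]; exact Xc_le f x i
    have hκ0 : 0 ≤ κ := div_nonneg (f.nonneg _) hmx.le
    refine (pad_le f hE x h0 h1 p q r M hM1 hM2 hM3 i hκ1 hκ0 hκe.le).trans ?_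
    refine mul_le_mul_of_nonneg_left ?_ (by positivity)
    have : κ ≤ E * Real.exp (- rr f x) := by
      rw [hκe] at kx
      exact le_of_mul_le_mul_left kx hmx
    calc κ ^ M ≤ (E * Real.exp (- rr f x)) ^ M := by gcongr
      _ = E ^ M * Real.exp (- rr f x) ^ M := by rw [mul_pow]
      _ ≤ _ := by gcongr
  have t2 : f (pad x p q r (i + 1)) ≤ E ^ L * mm f x ^ L := by
    have := pad_le f hE x h0 h1 p q r 0 (by omega) (by omega) (by omega) (i + 1) (κ := 1) le_rfl zero_le_one
      (by rw [mul_one]; exact Xc_le f x _)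
    simpa using this
  have t3 : f (Xc y i) ≤ mm f y * (E ^ M * ex) := by
    refine ky.trans ?_
    have : E ≤ E ^ M := le_self_pow₀ hE1 (by omega)
    gcongr
  have t4 := Xc_le f y (i + 1)
  have u1 : f (pad x p q r i * Xc y (i + 1)) ≤ E ^ (L + M) * mm f x ^ L * mm f y * ex := by
    rw [map_mul]
    calc _ ≤ E ^ L * mm f x ^ L * (E ^ M * ex) * mm f y := by gcongr
      _ = _ := by rw [pow_add]; ring
  have u2 : f (- (pad x p q r (i + 1) * Xc y i)) ≤ E ^ (L + M) * mm f x ^ L * mm f y * ex := by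
    rw [f.map_neg, map_mul]
    calc _ ≤ E ^ L * mm f x ^ L * (mm f y * (E ^ M * ex)) := by gcongr
      _ = _ := by rw [pow_add]; ring
  rw [sub_eq_add_neg]
  refine (hE.add_le _ _ u1 u2).trans (le_of_eq ?_)
  rw [pow_add, pow_add, pow_add]; ring

lemma local_log_bound (f : AbsoluteValue K ℝ) {E : ℝ} (hE : Tame f E) (x y : K) (h0 : x ≠ 0)
    (h1 : x ≠ 1) (k0 : y ≠ 0) (k1 : y ≠ 1)
    (p q r M : ℕ) (hM0 : 1 ≤ M) (hM1 : M ≤ q + r + 1) (hM2 : M ≤ p + r + 1) (hM3 : M ≤ p + q + 1)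
    (hty : ty f x = ty f y) (hD : DD x y p q r ≠ 0) :
    Real.log (f (DD x y p q r)) ≤ (p + q + r + 1 + 1 + M : ℕ) * Real.log E +
      (p + q + r + 1 : ℕ) * Real.log (mm f x) + Real.log (mm f y)
      - min (M * rr f x) (rr f y) := by
  have h := local_bound f hE x y h0 h1 k0 k1 p q r M hM0 hM1 hM2 hM3 hty
  have hmx := mm_pos f x
  have hmy := mm_pos f y
  have hE0 : 0 < E := zero_lt_one.trans_le hE.one_le
  refine (Real.log_le_log (f.pos hD) h).trans (le_of_eq ?_)
  rw [Real.log_mul (by positivity) (by positivity), Real.log_mul (by positivity) (by positivity),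
    Real.log_mul (by positivity) (by positivity), Real.log_pow, Real.log_pow, Real.log_exp]
  ring

end Local2
end TailBound

namespace TailBound
noncomputable section Local3

lemma complex_close (z w : ℂ) (hz : z ≠ 0) (hw : w ≠ 0)
    (h1 : |Real.log ‖z‖ - Real.log ‖w‖| < 1 / 3) (h2 : |z.arg - w.arg| < 1 / 3) :
    4 * ‖z - w‖ ^ 2 < ‖z‖ * ‖w‖ := by
  have pz := norm_pos_iff.mpr hz
  have pw := norm_pos_iff.mpr hw
  have e1 : ‖z - w‖ ^ 2 = ‖z‖ ^ 2 + ‖w‖ ^ 2 - 2 * (‖z‖ * ‖w‖) * Real.cos (z.arg - w.arg) := by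
    rw [Complex.sq_norm, Complex.normSq_apply, Complex.sub_re, Complex.sub_im,
      ← Complex.norm_mul_cos_arg z, ← Complex.norm_mul_cos_arg w, ← Complex.norm_mul_sin_arg z,
      ← Complex.norm_mul_sin_arg w, Real.cos_sub]
    have a1 := Real.sin_sq_add_cos_sq z.arg
    have a2 := Real.sin_sq_add_cos_sq w.arg
    linear_combination ‖z‖ ^ 2 * a1 + ‖w‖ ^ 2 * a2
  have e2 : ‖z‖ ^ 2 + ‖w‖ ^ 2 = 2 * (‖z‖ * ‖w‖) * Real.cosh (Real.log ‖z‖ - Real.log ‖w‖) := by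
    rw [Real.cosh_eq, neg_sub, Real.exp_sub, Real.exp_sub, Real.exp_log pz, Real.exp_log pw]
    field_simp
  have b1 := Real.cosh_le_exp_half_sq (Real.log ‖z‖ - Real.log ‖w‖)
  have b2 := Real.one_sub_sq_div_two_le_cos (x := z.arg - w.arg)
  have s1 : (Real.log ‖z‖ - Real.log ‖w‖) ^ 2 ≤ 1 / 9 := by
    rw [← sq_abs]; nlinarith [abs_nonneg (Real.log ‖z‖ - Real.log ‖w‖)]
  have s2 : (z.arg - w.arg) ^ 2 ≤ 1 / 9 := by
    rw [← sq_abs]; nlinarith [abs_nonneg (z.arg - w.arg)]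
  have b3 : Real.exp ((Real.log ‖z‖ - Real.log ‖w‖) ^ 2 / 2) ≤ Real.exp (1 / 18) :=
    Real.exp_le_exp.mpr (by linarith)
  have b4 : Real.exp (1 / 18) ≤ 18 / 17 := by
    have := Real.add_one_le_exp (-(1 / 18) : ℝ)
    have h3 : Real.exp (1 / 18) * Real.exp (-(1 / 18)) = 1 := by rw [← Real.exp_add]; simp
    have := Real.exp_pos (1 / 18)
    nlinarith
  have hp := mul_pos pz pw
  rw [e1, e2]
  nlinarith

variable {K : Type*} [Field K]

def zt (x : K) (i : Fin 3) : K := Xc x i / Xc x (i + 1)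

def tt (f : AbsoluteValue K ℝ) (x : K) : ℝ := - Real.log (f (zt x (ty f x)))

lemma zt_ne (x : K) (h0 : x ≠ 0) (h1 : x ≠ 1) (i : Fin 3) : zt x i ≠ 0 :=
  div_ne_zero (Xc_ne x h0 h1 _) (Xc_ne x h0 h1 _)

lemma tt_nonneg (f : AbsoluteValue K ℝ) (x : K) (h0 : x ≠ 0) (h1 : x ≠ 1) : 0 ≤ tt f x := by
  have h2 : f (zt x (ty f x)) ≤ 1 := by
    rw [zt, map_div₀, div_le_one (f.pos (Xc_ne x h0 h1 _))]
    exact ty_le f x _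
  have := Real.log_nonpos (f.nonneg _) h2
  unfold tt; linarith

lemma tt_le_rr (f : AbsoluteValue K ℝ) (x : K) (h0 : x ≠ 0) (h1 : x ≠ 1) : tt f x ≤ rr f x := by
  set i := ty f x with hi
  have q0 := f.pos (Xc_ne x h0 h1 i)
  have q1 := f.pos (Xc_ne x h0 h1 (i + 1))
  have q2 := f.pos (Xc_ne x h0 h1 (i + 2))
  have l1 := Real.log_le_log q1 (Xc_le f x (i + 1))
  have l2 := Real.log_le_log q2 (Xc_le f x (i + 2))
  have hp := congrArg Real.log (Xc_prod f x i)
  rw [Real.log_mul (by positivity) (by positivity), Real.log_mul (by positivity) (by positivity),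
    Real.log_mul (f.pos h0).ne' (f.pos (sub_ne_zero.mpr h1.symm)).ne'] at hp
  unfold tt rr
  rw [← hi, zt, map_div₀, Real.log_div (by positivity) (by positivity)]
  linarith

lemma det_eq (x y : K) (i : Fin 3) :
    Xc x i * Xc y (i + 1) - Xc x (i + 1) * Xc y i = x - y := by
  fin_cases i <;> simp [Xc] <;> ring

lemma det_zt (x y : K) (h0 : x ≠ 0) (h1 : x ≠ 1) (k0 : y ≠ 0) (k1 : y ≠ 1) (i : Fin 3) :
    x - y = (zt x i - zt y i) * (Xc x (i + 1) * Xc y (i + 1)) := by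
  rw [← det_eq x y i, zt, zt]
  have := Xc_ne x h0 h1 (i + 1)
  have := Xc_ne y k0 k1 (i + 1)
  field_simp

lemma small_nonarch (f : AbsoluteValue K ℝ) (hf : IsNonarchimedean f) (x y : K) (h0 : x ≠ 0)
    (h1 : x ≠ 1) (k0 : y ≠ 0) (k1 : y ≠ 1) (hxy : x ≠ y) (hty : ty f x = ty f y)
    (ht : tt f x = tt f y) :
    Real.log (f (x - y)) ≤ Real.log (mm f x) + Real.log (mm f y) - (rr f x + rr f y) / 2 := by
  have hE : Tame f 1 := Or.inr ⟨rfl, hf⟩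
  have hmx := mm_pos f x
  have hmy := mm_pos f y
  set i := ty f x with hi
  have key : ∀ z : K, z ≠ 0 → z ≠ 1 → ty f z = i → rr f z = tt f z := by
    intro z z0 z1 hz
    have q0 := f.pos (Xc_ne z z0 z1 i)
    have q1 := f.pos (Xc_ne z z0 z1 (i + 1))
    have q2 := f.pos (Xc_ne z z0 z1 (i + 2))
    have m1 := (Xc_le f z (i + 1)).antisymm (by simpa using mm_le_mid f hE z (i + 1) (hz ▸ fin3_ne1 i))
    have m2 := (Xc_le f z (i + 2)).antisymm (by simpa using mm_le_mid f hE z (i + 2) (hz ▸ fin3_ne2 i))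
    have hp := congrArg Real.log (Xc_prod f z i)
    rw [Real.log_mul (by positivity) (by positivity), Real.log_mul (by positivity) (by positivity),
      Real.log_mul (f.pos z0).ne' (f.pos (sub_ne_zero.mpr z1.symm)).ne'] at hp
    unfold tt rr
    rw [hz, zt, map_div₀, Real.log_div (by positivity) (by positivity)]
    rw [m1, m2] at hp
    rw [m1]
    linarith
  have kx := key x h0 h1 rfl
  have ky := key y k0 k1 hty.symm
  rw [kx, ky, ← ht]
  have zx := f.pos (zt_ne x h0 h1 i)
  have zy := f.pos (zt_ne y k0 k1 i)
  have hz : f (zt x i) = f (zt y i) := by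
    unfold tt at ht
    rw [← hi, ← hty] at ht
    exact Real.log_injOn_pos zx zy (by linarith)
  have hle : f (x - y) ≤ f (zt x i) * (mm f x * mm f y) := by
    rw [det_zt x y h0 h1 k0 k1 i, map_mul, map_mul]
    have a1 : f (zt x i - zt y i) ≤ f (zt x i) := by
      rw [sub_eq_add_neg]
      refine (hf _ _).trans (max_le le_rfl ?_)
      rw [f.map_neg, hz]
    have a2 := Xc_le f x (i + 1)
    have a3 := Xc_le f y (i + 1)
    gcongr
  refine (Real.log_le_log (f.pos (sub_ne_zero.mpr hxy)) hle).trans (le_of_eq ?_)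
  rw [Real.log_mul (by positivity) (by positivity), Real.log_mul (by positivity) (by positivity)]
  unfold tt
  rw [← hi]; ring

lemma small_arch (f : AbsoluteValue K ℝ) (σ : K →+* ℂ) (hf : ∀ z, f z = ‖σ z‖) (x y : K)
    (h0 : x ≠ 0)
    (h1 : x ≠ 1) (k0 : y ≠ 0) (k1 : y ≠ 1) (hxy : x ≠ y) (hty : ty f x = ty f y)
    (ht : |tt f x - tt f y| < 1 / 3)
    (ha : |(σ (zt x (ty f x))).arg - (σ (zt y (ty f y))).arg| < 1 / 3) :
    Real.log (f (x - y)) < Real.log (mm f x) + Real.log (mm f y) - (rr f x + rr f y) / 2 := by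
  have hE : Tame f 2 := Or.inl rfl
  have hmx := mm_pos f x
  have hmy := mm_pos f y
  set i := ty f x with hi
  rw [← hty] at ha
  have key : ∀ z : K, z ≠ 0 → z ≠ 1 → ty f z = i →
      f (Xc z i) * f (Xc z (i + 1)) ≤ 2 * mm f z ^ 2 * Real.exp (- rr f z) := by
    intro z z0 z1 hz
    have hmz := mm_pos f z
    have m2 := mm_le_mid f hE z (i + 2) (hz ▸ fin3_ne2 i)
    have hp := Xc_prod f z i
    rw [exp_rr f z z0 z1] at hp
    have hn : 0 ≤ f (Xc z i) * f (Xc z (i + 1)) := mul_nonneg (f.nonneg _) (f.nonneg _)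
    refine le_of_mul_le_mul_right ?_ hmz
    calc f (Xc z i) * f (Xc z (i + 1)) * mm f z ≤ f (Xc z i) * f (Xc z (i + 1)) * (2 * f (Xc z (i + 2))) := by gcongr
      _ = 2 * (mm f z ^ 3 * Real.exp (-rr f z)) := by rw [← hp]; ring
      _ = _ := by ring
  have kx := key x h0 h1 rfl
  have ky := key y k0 k1 hty.symm
  have zx := zt_ne x h0 h1 i
  have zy := zt_ne y k0 k1 i
  have hc := complex_close (σ (zt x i)) (σ (zt y i)) (by simpa using zx) (by simpa using zy)
    (by
      rw [← hf, ← hf]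
      unfold tt at ht
      rw [← hi, ← hty] at ht
      rw [abs_sub_comm]
      convert ht using 2
      ring) ha
  rw [← map_sub, ← hf, ← hf, ← hf] at hc
  have x1 := f.pos (Xc_ne x h0 h1 (i + 1))
  have y1 := f.pos (Xc_ne y k0 k1 (i + 1))
  have ex : f (zt x i) * f (Xc x (i + 1)) = f (Xc x i) := by
    rw [zt, map_div₀]; field_simp
  have ey : f (zt y i) * f (Xc y (i + 1)) = f (Xc y i) := by
    rw [zt, map_div₀]; field_simp
  have hD : f (x - y) ^ 2 < mm f x ^ 2 * mm f y ^ 2 * Real.exp (- (rr f x + rr f y)) := by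
    rw [det_zt x y h0 h1 k0 k1 i, map_mul, map_mul]
    have hpos : 0 < (f (Xc x (i + 1)) * f (Xc y (i + 1))) ^ 2 := by positivity
    have s1 := mul_lt_mul_of_pos_right hc hpos
    have s2 : f (zt x i) * f (zt y i) * (f (Xc x (i + 1)) * f (Xc y (i + 1))) ^ 2
        = (f (Xc x i) * f (Xc x (i + 1))) * (f (Xc y i) * f (Xc y (i + 1))) := by
      rw [← ex, ← ey]; ring
    have s3 : (f (Xc x i) * f (Xc x (i + 1))) * (f (Xc y i) * f (Xc y (i + 1))) ≤
        (2 * mm f x ^ 2 * Real.exp (- rr f x)) * (2 * mm f y ^ 2 * Real.exp (- rr f y)) := by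
      refine mul_le_mul kx ky (mul_nonneg (f.nonneg _) (f.nonneg _)) (by positivity)
    have s4 : Real.exp (- (rr f x + rr f y)) = Real.exp (- rr f x) * Real.exp (- rr f y) := by
      rw [← Real.exp_add]; congr 1; ring
    rw [s4]
    rw [s2] at s1
    nlinarith
  have h2 := Real.log_lt_log (pow_pos (f.pos (sub_ne_zero.mpr hxy)) 2) hD
  rw [Real.log_mul (by positivity) (by positivity), Real.log_mul (by positivity) (by positivity),
    Real.log_pow, Real.log_pow, Real.log_pow, Real.log_exp] at h2
  push_cast at h2
  linarith

end Local3
end TailBound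

namespace TailBound
noncomputable section Core

/-- The abstract situation of the unit equation. -/
structure Setup (K ι : Type*) [Field K] [CharZero K] [Fintype ι] where
  av : ι → AbsoluteValue K ℝ
  e : ι → ℝ
  one_le_e : ∀ v, 1 ≤ e v
  e_le_two : ∀ v, e v ≤ 2
  arch : ι → Prop
  σ : ι → K →+* ℂ
  av_arch : ∀ v, arch v → ∀ z, av v z = ‖σ v z‖
  nonarch : ∀ v, ¬ arch v → IsNonarchimedean (av v)
  disc : ∀ v, ¬ arch v → ∀ x y : K, x ≠ 0 → y ≠ 0 →
    |Real.log (av v x) - Real.log (av v y)| < 1 / 3 → av v x = av v y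
  S : Finset ι
  arch_S : ∀ v, arch v → v ∈ S
  exists_arch : ∃ v, arch v
  Out : Set (AbsoluteValue K ℝ)
  out_nonarch : ∀ f ∈ Out, IsNonarchimedean f
  PF : ∀ D : K, D ≠ 0 → (∀ f ∈ Out, f D ≤ 1) → 0 ≤ ∑ v, e v * Real.log (av v D)
  Sol : Set K
  ne0 : ∀ x ∈ Sol, x ≠ 0
  ne1 : ∀ x ∈ Sol, x ≠ 1
  out0 : ∀ x ∈ Sol, ∀ f ∈ Out, f x = 1
  out1 : ∀ x ∈ Sol, ∀ f ∈ Out, f (1 - x) = 1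
  eq0 : ∀ x ∈ Sol, ∀ y ∈ Sol, ∀ v, v ∉ S → av v x = av v y
  eq1 : ∀ x ∈ Sol, ∀ y ∈ Sol, ∀ v, v ∉ S → av v (1 - x) = av v (1 - y)

variable {K ι : Type*} [Field K] [CharZero K] [Fintype ι] (A : Setup K ι)

namespace Setup

def EE (v : ι) : ℝ := if A.arch v then 2 else 1

lemma tame (v : ι) : Tame (A.av v) (A.EE v) := by
  unfold EE
  split_ifs with h
  · exact Or.inl rfl
  · exact Or.inr ⟨rfl, A.nonarch v h⟩

def ht (x : K) : ℝ := ∑ v, A.e v * Real.log (mm (A.av v) x)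

def rho (v : ι) (x : K) : ℝ := A.e v * rr (A.av v) x

lemma e_pos (v : ι) : 0 < A.e v := zero_lt_one.trans_le (A.one_le_e v)

lemma ht_nonneg (x : K) : 0 ≤ A.ht x :=
  Finset.sum_nonneg fun v _ => mul_nonneg (A.e_pos v).le (Real.log_nonneg (one_le_mm _ _))

lemma rho_nonneg (v : ι) {x : K} (hx : x ∈ A.Sol) : 0 ≤ A.rho v x :=
  mul_nonneg (A.e_pos v).le (rr_nonneg _ _ (A.ne0 x hx) (A.ne1 x hx))

lemma sum_zero {z : K} (hz : z ≠ 0) (h : ∀ f ∈ A.Out, f z = 1) :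
    ∑ v, A.e v * Real.log (A.av v z) = 0 := by
  have h1 := A.PF z hz (fun f hf => (h f hf).le)
  have h2 := A.PF z⁻¹ (inv_ne_zero hz) (fun f hf => by rw [map_inv₀, h f hf, inv_one])
  simp only [map_inv₀, Real.log_inv, mul_neg, Finset.sum_neg_distrib] at h2
  linarith

lemma sum_rho {x : K} (hx : x ∈ A.Sol) : ∑ v, A.rho v x = 3 * A.ht x := by
  have h0 := A.sum_zero (A.ne0 x hx) (A.out0 x hx)
  have h1 := A.sum_zero (sub_ne_zero.mpr (A.ne1 x hx).symm) (A.out1 x hx)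
  have : ∑ v, A.rho v x = 3 * A.ht x - ∑ v, A.e v * Real.log (A.av v x)
      - ∑ v, A.e v * Real.log (A.av v (1 - x)) := by
    rw [ht, Finset.mul_sum, ← Finset.sum_sub_distrib, ← Finset.sum_sub_distrib]
    refine Finset.sum_congr rfl fun v _ => ?_
    unfold rho rr; ring
  rw [this, h0, h1]; ring

lemma mm_eq_of {f : AbsoluteValue K ℝ} {x y : K} (h0 : f x = f y) (h1 : f (1 - x) = f (1 - y)) :
    mm f x = mm f y ∧ rr f x = rr f y ∧ ty f x = ty f y := by
  have : mm f x = mm f y := by rw [mm, mm, h0, h1]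
  refine ⟨this, ?_, ?_⟩
  · rw [rr, rr, this, h0, h1]
  · unfold ty; rw [h0, h1]

lemma mm_out {f : AbsoluteValue K ℝ} {x : K} (h0 : f x = 1) (h1 : f (1 - x) = 1) :
    mm f x = 1 ∧ rr f x = 0 := by
  have : mm f x = 1 := by simp [mm, h0, h1]
  refine ⟨this, ?_⟩
  simp [rr, this, h0, h1]

/-- types agree on `S` -/
def SameTy (x y : K) : Prop := ∀ v ∈ A.S, ty (A.av v) x = ty (A.av v) y

lemma ty_all {x y : K} (hx : x ∈ A.Sol) (hy : y ∈ A.Sol) (h : A.SameTy x y) (v : ι) :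
    ty (A.av v) x = ty (A.av v) y := by
  by_cases hv : v ∈ A.S
  · exact h v hv
  · exact (mm_eq_of (A.eq0 x hx y hy v hv) (A.eq1 x hx y hy v hv)).2.2

lemma sum_logE : ∑ v, A.e v * Real.log (A.EE v) ≤ A.S.card * Real.log 4 := by
  have h1 : ∑ v, A.e v * Real.log (A.EE v) = ∑ v ∈ A.S, A.e v * Real.log (A.EE v) := by
    symm
    refine Finset.sum_subset (Finset.subset_univ _) fun v _ hv => ?_
    have : ¬ A.arch v := fun h => hv (A.arch_S v h)
    simp [EE, this]
  rw [h1, ← nsmul_eq_mul]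
  refine Finset.sum_le_card_nsmul _ _ _ fun v _ => ?_
  have h4 : Real.log 4 = 2 * Real.log 2 := by
    rw [show (4 : ℝ) = 2 ^ 2 by norm_num, Real.log_pow]; norm_num
  have h2 : 0 < Real.log 2 := Real.log_pos (by norm_num)
  unfold EE
  split_ifs
  · rw [h4]; nlinarith [A.e_le_two v]
  · simp; positivity

lemma global_bound {x y : K} (hx : x ∈ A.Sol) (hy : y ∈ A.Sol) (h : A.SameTy x y)
    (p q r M : ℕ) (hM0 : 1 ≤ M) (hM1 : M ≤ q + r + 1) (hM2 : M ≤ p + r + 1) (hM3 : M ≤ p + q + 1)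
    (hD : DD x y p q r ≠ 0) :
    ∑ v, min (M * A.rho v x) (A.rho v y) ≤ (p + q + r + 1 : ℕ) * A.ht x + A.ht y
      + (p + q + r + 1 + 1 + M : ℕ) * (A.S.card * Real.log 4) := by
  have x0 := A.ne0 x hx
  have x1 := A.ne1 x hx
  have y0 := A.ne0 y hy
  have y1 := A.ne1 y hy
  have hpf := A.PF _ hD (by
    intro f hf
    have mx := mm_out (A.out0 x hx f hf) (A.out1 x hx f hf)
    have my := mm_out (A.out0 y hy f hf) (A.out1 y hy f hf)
    have hty : ty f x = ty f y := by
      unfold ty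
      rw [A.out0 x hx f hf, A.out1 x hx f hf, A.out0 y hy f hf, A.out1 y hy f hf]
    have := local_bound f (E := 1) (Or.inr ⟨rfl, A.out_nonarch f hf⟩) x y x0 x1 y0 y1 p q r M
      hM0 hM1 hM2 hM3 hty
    rw [mx.1, my.1, mx.2, my.2] at this
    simpa using this)
  have hloc : ∑ v, A.e v * Real.log (A.av v (DD x y p q r)) ≤
      ∑ v, ((p + q + r + 1 + 1 + M : ℕ) * (A.e v * Real.log (A.EE v)) +
        (p + q + r + 1 : ℕ) * (A.e v * Real.log (mm (A.av v) x))
        + A.e v * Real.log (mm (A.av v) y) - min (M * A.rho v x) (A.rho v y)) := by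
    refine Finset.sum_le_sum fun v _ => ?_
    have := local_log_bound (A.av v) (A.tame v) x y x0 x1 y0 y1 p q r M hM0 hM1 hM2 hM3
      (A.ty_all hx hy h v) hD
    have h2 := mul_le_mul_of_nonneg_left this (A.e_pos v).le
    refine h2.trans (le_of_eq ?_)
    have h3 : min (M * A.rho v x) (A.rho v y) = A.e v * min (M * rr (A.av v) x) (rr (A.av v) y) := by
      rw [mul_min_of_nonneg _ _ (A.e_pos v).le]
      unfold rho
      congr 1; ring
    rw [h3]; ring
  rw [Finset.sum_sub_distrib, Finset.sum_add_distrib, Finset.sum_add_distrib, ← Finset.mul_sum,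
    ← Finset.mul_sum] at hloc
  have hlE := mul_le_mul_of_nonneg_left A.sum_logE (Nat.cast_nonneg (α := ℝ) (p + q + r + 1 + 1 + M))
  unfold ht
  linarith

/-! ### Large solutions -/

def kk : ℝ := 30 * (A.S.card + 1)

def rhoStar (x : K) : ℝ := ∑ v ∈ Finset.univ \ A.S, A.rho v x

def rhoO (x : K) : Option A.S → ℝ
  | none => A.rhoStar x
  | some v => A.rho v x

def bigF (x : K) (j : Option A.S) : ℕ := ⌊A.kk * A.rhoO x j / (3 * A.ht x)⌋₊

lemma rhoO_nonneg {x : K} (hx : x ∈ A.Sol) (j : Option A.S) : 0 ≤ A.rhoO x j := by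
  cases j with
  | none => exact Finset.sum_nonneg fun v _ => A.rho_nonneg v hx
  | some v => exact A.rho_nonneg v hx

lemma sum_rhoO {x : K} (hx : x ∈ A.Sol) : ∑ j, A.rhoO x j = 3 * A.ht x := by
  rw [Fintype.sum_option, ← A.sum_rho hx]
  simp only [rhoO, rhoStar]
  rw [Finset.sum_coe_sort A.S (fun v => A.rho v x)]
  exact Finset.sum_sdiff (Finset.subset_univ A.S)

lemma kk_pos : 0 < A.kk := by unfold kk; positivity

lemma bigF_le {x : K} (hx : x ∈ A.Sol) (hh : 0 < A.ht x) :
    ∑ j, A.bigF x j ≤ 30 * (A.S.card + 1) := by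
  have : (∑ j, A.bigF x j : ℝ) ≤ A.kk := by
    calc (∑ j, A.bigF x j : ℝ) ≤ ∑ j, A.kk * A.rhoO x j / (3 * A.ht x) := by
          refine Finset.sum_le_sum fun j _ => Nat.floor_le ?_
          have := A.rhoO_nonneg hx j
          have := A.kk_pos
          positivity
      _ = A.kk := by
        rw [← Finset.sum_div, ← Finset.mul_sum, A.sum_rhoO hx]
        field_simp
  unfold kk at this
  exact_mod_cast this

lemma bigF_ge {x : K} (hx : x ∈ A.Sol) (hh : 0 < A.ht x) :
    (29 * (A.S.card + 1) : ℝ) ≤ ∑ j, (A.bigF x j : ℝ) := by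
  have h1 : ∑ j, (A.kk * A.rhoO x j / (3 * A.ht x) - 1) ≤ ∑ j, (A.bigF x j : ℝ) := by
    refine Finset.sum_le_sum fun j _ => ?_
    have := Nat.lt_floor_add_one (A.kk * A.rhoO x j / (3 * A.ht x))
    unfold bigF
    linarith
  rw [Finset.sum_sub_distrib, ← Finset.sum_div, ← Finset.mul_sum, A.sum_rhoO hx] at h1
  have h2 : A.kk * (3 * A.ht x) / (3 * A.ht x) = A.kk := by field_simp
  rw [h2] at h1
  simp only [Finset.sum_const, Finset.card_univ, Fintype.card_option, Fintype.card_coe,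
    nsmul_eq_mul, mul_one] at h1
  unfold kk at h1
  push_cast at h1
  linarith

lemma min_sum_ge {x y : K} (hx : x ∈ A.Sol) (hy : y ∈ A.Sol) (hhx : 0 < A.ht x) (hhy : 0 < A.ht y)
    (hF : A.bigF x = A.bigF y) (M : ℕ) (hM : 1 ≤ M) :
    2.9 * min (M * A.ht x) (A.ht y) ≤ ∑ v, min (M * A.rho v x) (A.rho v y) := by
  set μ := min (M * A.ht x) (A.ht y) with hμ
  have hM' : (1 : ℝ) ≤ M := by exact_mod_cast hM
  have hμ0 : 0 ≤ μ := le_min (by positivity) hhy.le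
  have hkk := A.kk_pos
  have low : ∀ (z : K), z ∈ A.Sol → 0 < A.ht z → ∀ j,
      (A.bigF z j : ℝ) * (3 / A.kk) * A.ht z ≤ A.rhoO z j := by
    intro z hz hhz j
    have : (A.bigF z j : ℝ) ≤ A.kk * A.rhoO z j / (3 * A.ht z) := by
      apply Nat.floor_le
      have := A.rhoO_nonneg hz j
      positivity
    rw [le_div_iff₀ (by positivity)] at this
    rw [mul_assoc, div_mul_eq_mul_div, mul_div_assoc', div_le_iff₀ hkk]
    linarith
  have step : ∑ j, (A.bigF x j : ℝ) * (3 / A.kk) * μ ≤ ∑ v, min (M * A.rho v x) (A.rho v y) := by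
    rw [Fintype.sum_option, ← Finset.sum_sdiff (Finset.subset_univ A.S),
      ← Finset.sum_coe_sort A.S (fun v => min (M * A.rho v x) (A.rho v y))]
    refine add_le_add ?_ (Finset.sum_le_sum fun v _ => ?_)
    · have h1 := low y hy hhy none
      rw [← hF] at h1
      have h2 : (A.bigF x none : ℝ) * (3 / A.kk) * μ ≤ (A.bigF x none : ℝ) * (3 / A.kk) * A.ht y := by
        refine mul_le_mul_of_nonneg_left (min_le_right _ _) (by positivity)
      refine h2.trans (h1.trans ?_)
      simp only [rhoO, rhoStar]
      refine Finset.sum_le_sum fun v hv => ?_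
      have hvS : v ∉ A.S := (Finset.mem_sdiff.mp hv).2
      have he : A.rho v x = A.rho v y := by
        unfold rho
        rw [(mm_eq_of (A.eq0 x hx y hy v hvS) (A.eq1 x hx y hy v hvS)).2.1]
      rw [he]
      refine le_min ?_ le_rfl
      have := A.rho_nonneg v hy
      nlinarith
    · have h1 := low x hx hhx (some v)
      have h2 := low y hy hhy (some v)
      rw [← hF] at h2
      simp only [rhoO] at h1 h2
      have hc : 0 ≤ (A.bigF x (some v) : ℝ) * (3 / A.kk) := by positivity
      refine le_min ?_ ?_
      · have := mul_le_mul_of_nonneg_left (min_le_left (M * A.ht x) (A.ht y)) hc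
        rw [← hμ] at this
        nlinarith
      · have := mul_le_mul_of_nonneg_left (min_le_right (M * A.ht x) (A.ht y)) hc
        rw [← hμ] at this
        linarith
  refine le_trans ?_ step
  rw [← Finset.sum_mul, ← Finset.sum_mul]
  refine mul_le_mul_of_nonneg_right ?_ hμ0
  have := A.bigF_ge hx hhx
  have h3 : (29 * (A.S.card + 1) : ℝ) * (3 / A.kk) = 2.9 := by
    unfold kk; field_simp; norm_num
  rw [← h3]
  gcongr

lemma log4 : Real.log 4 ≤ 1.3864 := by
  have h4 : Real.log 4 = 2 * Real.log 2 := by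
    rw [show (4 : ℝ) = 2 ^ 2 by norm_num, Real.log_pow]; norm_num
  rw [h4]
  have := Real.log_two_lt_d9
  linarith

/-- The gap principle. -/
lemma gap {x y : K} (hx : x ∈ A.Sol) (hy : y ∈ A.Sol) (hxy : x ≠ y) (hT : A.SameTy x y)
    (hF : A.bigF x = A.bigF y) (hbig : 16 * (A.S.card : ℝ) < A.ht x) (hle : A.ht x ≤ A.ht y) :
    1.6 * A.ht x ≤ A.ht y := by
  have hs0 : (0 : ℝ) ≤ A.S.card := Nat.cast_nonneg _
  have hhx : 0 < A.ht x := by linarith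
  have h00 := A.ne0 x hx
  have h01 : (1 : K) - x ≠ 0 := sub_ne_zero.mpr (A.ne1 x hx).symm
  have hD : DD x y 0 0 0 ≠ 0 := by
    have e1 : DD x y 0 0 0 = x - y := by
      simp only [DD, pad, Xc, zero_add, pow_one, V_111, Matrix.cons_val_zero, Matrix.cons_val_one,
        zero_sub, sub_zero, sub_sub_cancel, inv_one, mul_one]
      field_simp
      ring
    rw [e1]
    exact sub_ne_zero.mpr hxy
  have h1 := A.global_bound hx hy hT 0 0 0 1 le_rfl le_rfl le_rfl le_rfl hD
  have h2 := A.min_sum_ge hx hy hhx (by linarith) hF 1 le_rfl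
  have h3 : min ((1 : ℕ) * A.ht x) (A.ht y) = A.ht x := by
    rw [Nat.cast_one, one_mul]; exact min_eq_left hle
  rw [h3] at h2
  have := log4
  have h4 : (A.S.card : ℝ) * Real.log 4 ≤ A.S.card * 1.3864 := by gcongr
  push_cast at h1 h2
  simp only [one_mul] at h2
  norm_num at h1
  linarith

lemma no_far {x y : K} (hx : x ∈ A.Sol) (hy : y ∈ A.Sol) (hT : A.SameTy x y)
    (hF : A.bigF x = A.bigF y) (hbig : 16 * (A.S.card : ℝ) < A.ht x) :
    A.ht y < 16 * A.ht x := by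
  by_contra hcon
  push Not at hcon
  have hs0 : (0 : ℝ) ≤ A.S.card := Nat.cast_nonneg _
  have hhx : 0 < A.ht x := by linarith
  obtain ⟨N, hN7, hN1, hN2⟩ : ∃ N : ℕ, 7 ≤ N ∧ 2 * (N : ℝ) * A.ht x < A.ht y ∧
      A.ht y ≤ (2 * N + 2) * A.ht x := by
    set l := A.ht y / (2 * A.ht x) with hl
    have hl8 : 8 ≤ l := by rw [hl, le_div_iff₀ (by positivity)]; linarith
    have hye : A.ht y = l * (2 * A.ht x) := by rw [hl]; field_simp
    have hc1 := Nat.le_ceil l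
    have hc2 := Nat.ceil_lt_add_one (by linarith : 0 ≤ l)
    have hc3 : 8 ≤ ⌈l⌉₊ := by
      have : (8 : ℝ) ≤ ⌈l⌉₊ := hl8.trans hc1
      exact_mod_cast this
    obtain ⟨N, hN⟩ : ∃ N, ⌈l⌉₊ = N + 1 := ⟨⌈l⌉₊ - 1, by omega⟩
    rw [hN] at hc1 hc2 hc3
    push_cast at hc1 hc2
    refine ⟨N, by omega, ?_, ?_⟩
    · rw [hye]; nlinarith
    · rw [hye]; nlinarith
  have hN7' : (7 : ℝ) ≤ N := by exact_mod_cast hN7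
  have main : ∃ p, (p = N ∨ p = N + 1) ∧ DD x y p N N ≠ 0 := by
    rcases DD_ne x y (A.ne0 x hx) (A.ne1 x hx) N with h | h
    · exact ⟨N, Or.inl rfl, h⟩
    · exact ⟨N + 1, Or.inr rfl, h⟩
  obtain ⟨p, hp, hD⟩ := main
  have hp1 : N ≤ p := by omega
  have hp2 : (p : ℝ) ≤ N + 1 := by
    have : p ≤ N + 1 := by omega
    exact_mod_cast this
  have h1 := A.global_bound hx hy hT p N N (2 * N + 1) (by omega) (by omega) (by omega) (by omega) hD
  have h2 := A.min_sum_ge hx hy hhx (by nlinarith) hF (2 * N + 1) (by omega)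
  have := log4
  have h4 : (A.S.card : ℝ) * Real.log 4 ≤ 0.08665 * A.ht x := by
    have : (A.S.card : ℝ) * Real.log 4 ≤ A.S.card * 1.3864 := by gcongr
    linarith
  push_cast at h1 h2
  have h5 : ((p : ℝ) + N + N + 1) * A.ht x ≤ (3 * N + 2) * A.ht x := by
    exact mul_le_mul_of_nonneg_right (by linarith) hhx.le
  have h6 : ((p : ℝ) + N + N + 1 + 1 + (2 * N + 1)) * (A.S.card * Real.log 4) ≤
      (5 * N + 4) * (0.08665 * A.ht x) := by
    have : 0 ≤ Real.log 4 := Real.log_nonneg (by norm_num)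
    refine mul_le_mul (by linarith) h4 (by positivity) (by positivity)
  have h7 := h2.trans h1
  have hNh : 7 * A.ht x ≤ N * A.ht x := by gcongr
  rcases min_choice ((2 * N + 1) * A.ht x) (A.ht y) with hm | hm
  · rw [hm] at h7
    linarith
  · rw [hm] at h7
    linarith

lemma chain (h : K → ℝ) : ∀ (n : ℕ) (F : Finset K), (∀ x ∈ F, 0 < h x) →
    (∀ x ∈ F, ∀ y ∈ F, x ≠ y → h x ≤ h y → 1.6 * h x ≤ h y) → n + 1 ≤ F.card →
    ∃ u ∈ F, ∃ w ∈ F, (∀ z ∈ F, h u ≤ h z) ∧ 1.6 ^ n * h u ≤ h w := by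
  intro n
  induction n with
  | zero =>
    intro F _ _ hc
    have hne : F.Nonempty := Finset.card_pos.mp (by omega)
    obtain ⟨u, hu, hmin⟩ := F.exists_min_image h hne
    exact ⟨u, hu, u, hu, hmin, by simp⟩
  | succ n ih =>
    intro F hpos hg hc
    have hne : F.Nonempty := Finset.card_pos.mp (by omega)
    obtain ⟨u, hu, hmin⟩ := F.exists_min_image h hne
    obtain ⟨u', hu', w, hw, _, hw2⟩ := ih (F.erase u) (fun x hx => hpos x (Finset.mem_of_mem_erase hx))
      (fun x hx y hy => hg x (Finset.mem_of_mem_erase hx) y (Finset.mem_of_mem_erase hy))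
      (by rw [Finset.card_erase_of_mem hu]; omega)
    refine ⟨u, hu, w, Finset.mem_of_mem_erase hw, hmin, ?_⟩
    have h1 := hg u hu u' (Finset.mem_of_mem_erase hu') (Finset.ne_of_mem_erase hu').symm
      (hmin u' (Finset.mem_of_mem_erase hu'))
    calc (1.6 : ℝ) ^ (n + 1) * h u = 1.6 ^ n * (1.6 * h u) := by ring
      _ ≤ 1.6 ^ n * h u' := by gcongr
      _ ≤ h w := hw2

lemma big_class (F : Finset K) (hsol : ∀ x ∈ F, x ∈ A.Sol)
    (hbig : ∀ x ∈ F, 16 * (A.S.card : ℝ) < A.ht x)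
    (hT : ∀ x ∈ F, ∀ y ∈ F, A.SameTy x y) (hF : ∀ x ∈ F, ∀ y ∈ F, A.bigF x = A.bigF y) :
    F.card ≤ 6 := by
  by_contra hcon
  push Not at hcon
  have hs0 : (0 : ℝ) ≤ A.S.card := Nat.cast_nonneg _
  obtain ⟨u, hu, w, hw, _, h2⟩ := chain A.ht 6 F (fun x hx => by linarith [hbig x hx])
    (fun x hx y hy hxy hle => A.gap (hsol x hx) (hsol y hy) hxy (hT x hx y hy) (hF x hx y hy)
      (hbig x hx) hle) (by omega)
  have h3 := A.no_far (hsol u hu) (hsol w hw) (hT u hu w hw) (hF u hu w hw) (hbig u hu)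
  have h4 := hbig u hu
  have : (16 : ℝ) ≤ 1.6 ^ 6 := by norm_num
  nlinarith

end Setup
end Core
end TailBound

namespace TailBound
noncomputable section Count

lemma comp_count (J : Type*) [Fintype J] (k : ℕ) :
    ∃ t : Finset (J → ℕ), (∀ f : J → ℕ, ∑ j, f j ≤ k → f ∈ t) ∧
      t.card ≤ (k + Fintype.card J).choose (Fintype.card J) := by
  refine ⟨((Finset.univ : Finset (Option J)).finsuppAntidiag k).image (fun g j => g (some j)), ?_, ?_⟩
  · intro f hf
    rw [Finset.mem_image]
    refine ⟨Finsupp.equivFunOnFinite.symm (fun o => o.elim (k - ∑ j, f j) f), ?_, ?_⟩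
    · rw [Finset.mem_finsuppAntidiag]
      refine ⟨?_, by simp⟩
      rw [Fintype.sum_option]
      simp
      omega
    · ext j; simp
  · refine Finset.card_image_le.trans ?_
    rw [Finset.card_finsuppAntidiag_nat_eq_multichoose, Nat.multichoose_eq]
    simp only [Finset.card_univ, Fintype.card_option]
    rw [show Fintype.card J + 1 + k - 1 = k + Fintype.card J by omega]
    rw [Nat.choose_symm_add]

lemma succ_pow_le (n : ℕ) (hn : 1 ≤ n) : ((n : ℝ) + 1) ^ n ≤ 3 * (n : ℝ) ^ n := by
  have hn' : (0 : ℝ) < n := by exact_mod_cast hn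
  have h1 : (1 + 1 / (n : ℝ)) ^ n ≤ 3 := by
    have h2 : 1 + 1 / (n : ℝ) ≤ Real.exp (1 / n) := by
      have := Real.add_one_le_exp (1 / (n : ℝ)); linarith
    calc (1 + 1 / (n : ℝ)) ^ n ≤ Real.exp (1 / n) ^ n := by gcongr
      _ = Real.exp 1 := by rw [← Real.exp_nat_mul]; congr 1; field_simp
      _ ≤ 3 := by have := Real.exp_one_lt_d9; linarith
  calc ((n : ℝ) + 1) ^ n = (1 + 1 / (n : ℝ)) ^ n * (n : ℝ) ^ n := by
        rw [← mul_pow]; congr 1; field_simp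
    _ ≤ _ := by gcongr

lemma self_pow1 (k : ℕ) : ((k + 1 : ℕ) : ℝ) ^ (k + 1) ≤ 3 ^ k * (k + 1).factorial := by
  induction k with
  | zero => simp
  | succ k ih =>
    have h := succ_pow_le (k + 1) (by omega)
    rw [Nat.factorial_succ, pow_succ]
    push_cast at *
    have : (0 : ℝ) < (k : ℝ) + 1 + 1 := by positivity
    calc ((k : ℝ) + 1 + 1) ^ (k + 1) * (k + 1 + 1) ≤ 3 * ((k : ℝ) + 1) ^ (k + 1) * (k + 1 + 1) := by gcongr
      _ ≤ 3 * (3 ^ k * ((k + 1).factorial : ℝ)) * (k + 1 + 1) := by gcongr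
      _ = _ := by ring

lemma self_pow2 (k : ℕ) : ((k + 2 : ℕ) : ℝ) ^ (k + 2) ≤ 2 * 3 ^ k * (k + 2).factorial := by
  induction k with
  | zero => norm_num [Nat.factorial]
  | succ k ih =>
    have h := succ_pow_le (k + 2) (by omega)
    rw [show k + 1 + 2 = k + 2 + 1 by ring, Nat.factorial_succ, pow_succ]
    push_cast at *
    calc ((k : ℝ) + 2 + 1) ^ (k + 2) * (k + 2 + 1) ≤ 3 * ((k : ℝ) + 2) ^ (k + 2) * (k + 2 + 1) := by gcongr
      _ ≤ 3 * (2 * 3 ^ k * ((k + 2).factorial : ℝ)) * (k + 2 + 1) := by gcongr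
      _ = _ := by ring

lemma choose_bd (c n : ℕ) (B : ℝ) (h : ((n : ℕ) : ℝ) ^ n ≤ B * n.factorial) :
    ((c * n).choose n : ℝ) ≤ c ^ n * B := by
  have h1 := Nat.choose_le_pow_div (α := ℝ) n (c * n)
  refine h1.trans ?_
  rw [div_le_iff₀ (by positivity)]
  push_cast
  rw [mul_pow]
  have : (0 : ℝ) ≤ (c : ℝ) ^ n := by positivity
  nlinarith

lemma final_num (s : ℕ) (hs : 1 ≤ s) :
    6 * (3 ^ s * (30 * (s + 1) + (s + 1)).choose (s + 1)) +
      3 ^ s * 20 ^ s * (144 * s + s).choose s + 1 ≤ 2 ^ (16 * s) := by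
  obtain ⟨k, rfl⟩ : ∃ k, s = k + 1 := ⟨s - 1, by omega⟩
  have h1 := choose_bd 31 (k + 2) _ (self_pow2 k)
  have h2 := choose_bd 145 (k + 1) _ (self_pow1 k)
  have e1 : 30 * (k + 1 + 1) + (k + 1 + 1) = 31 * (k + 2) := by ring
  have e2 : 144 * (k + 1) + (k + 1) = 145 * (k + 1) := by ring
  rw [e1, e2]
  have : (6 * (3 ^ (k + 1) * ((31 * (k + 2)).choose (k + 1 + 1) : ℝ)) +
      3 ^ (k + 1) * 20 ^ (k + 1) * ((145 * (k + 1)).choose (k + 1) : ℝ) + 1 : ℝ) ≤ 2 ^ (16 * (k + 1)) := by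
    calc (6 * (3 ^ (k + 1) * ((31 * (k + 2)).choose (k + 1 + 1) : ℝ)) +
      3 ^ (k + 1) * 20 ^ (k + 1) * ((145 * (k + 1)).choose (k + 1) : ℝ) + 1 : ℝ)
        ≤ 6 * (3 ^ (k + 1) * ((31 : ℕ) ^ (k + 2) * (2 * 3 ^ k))) +
          3 ^ (k + 1) * 20 ^ (k + 1) * ((145 : ℕ) ^ (k + 1) * 3 ^ k) + 1 := by
          gcongr
      _ = 34596 * 279 ^ k + 8700 * 26100 ^ k + 1 := by
        rw [show (279 : ℝ) = 3 * 31 * 3 by norm_num, show (26100 : ℝ) = 3 * 20 * 145 * 3 by norm_num]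
        simp only [mul_pow, pow_succ]
        push_cast
        ring
      _ ≤ 34596 * 65536 ^ k + 8700 * 65536 ^ k + 1 * 65536 ^ k := by
        have : (1 : ℝ) ≤ 65536 ^ k := one_le_pow₀ (by norm_num)
        gcongr <;> norm_num
        exact this
      _ ≤ 65536 * 65536 ^ k := by
        rw [← add_mul, ← add_mul]
        gcongr; norm_num
      _ = 2 ^ (16 * (k + 1)) := by
        rw [pow_mul, pow_succ]; norm_num; ring
  exact_mod_cast this

namespace Setup
variable {K ι : Type*} [Field K] [CharZero K] [Fintype ι] (A : Setup K ι)

def tyF (x : K) (v : A.S) : Fin 3 := ty (A.av v) x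

lemma sameTy_of {x y : K} (h : A.tyF x = A.tyF y) : A.SameTy x y :=
  fun v hv => congrFun h ⟨v, hv⟩

lemma big_count (F : Finset K) (hsol : ∀ x ∈ F, x ∈ A.Sol)
    (hbig : ∀ x ∈ F, 16 * (A.S.card : ℝ) < A.ht x) :
    F.card ≤ 6 * (3 ^ A.S.card * (30 * (A.S.card + 1) + (A.S.card + 1)).choose (A.S.card + 1)) := by
  obtain ⟨t, ht1, ht2⟩ := comp_count (Option A.S) (30 * (A.S.card + 1))
  have hs0 : (0 : ℝ) ≤ A.S.card := Nat.cast_nonneg _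
  have := Finset.card_le_mul_card_image_of_maps_to (s := F) (f := fun x => (A.tyF x, A.bigF x))
    (t := (Finset.univ : Finset (A.S → Fin 3)) ×ˢ t)
    (by
      intro x hx
      simp only [Finset.mem_product, Finset.mem_univ, true_and]
      exact ht1 _ (A.bigF_le (hsol x hx) (by linarith [hbig x hx]))) 6
    (by
      intro b _
      refine A.big_class _ ?_ ?_ ?_ ?_
      · intro x hx; exact hsol x (Finset.mem_filter.mp hx).1
      · intro x hx; exact hbig x (Finset.mem_filter.mp hx).1
      · intro x hx y hy
        have h1 := (Finset.mem_filter.mp hx).2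
        have h2 := (Finset.mem_filter.mp hy).2
        exact A.sameTy_of (congrArg Prod.fst (h1.trans h2.symm))
      · intro x hx y hy
        have h1 := (Finset.mem_filter.mp hx).2
        have h2 := (Finset.mem_filter.mp hy).2
        exact congrArg Prod.snd (h1.trans h2.symm))
  refine this.trans ?_
  rw [Finset.card_product]
  simp only [Fintype.card_option, Fintype.card_coe] at ht2
  have e : (Finset.univ : Finset (A.S → Fin 3)).card = 3 ^ A.S.card := by
    rw [Finset.card_univ]; simp
  rw [e]
  gcongr

/-! ### Small solutions -/

def smF (x : K) (v : A.S) : ℕ := ⌊3 * tt (A.av v) x⌋₊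

def agF (x : K) (v : A.S) : ℤ := ⌊3 * (A.σ v (zt x (ty (A.av v) x))).arg⌋

lemma agF_mem (x : K) (v : A.S) : A.agF x v ∈ Finset.Icc (-10 : ℤ) 9 := by
  have h1 := Complex.neg_pi_lt_arg (A.σ v (zt x (ty (A.av v) x)))
  have h2 := Complex.arg_le_pi (A.σ v (zt x (ty (A.av v) x)))
  have h3 := Real.pi_lt_d2
  rw [Finset.mem_Icc]
  unfold agF
  constructor
  · rw [Int.le_floor]; push_cast; linarith
  · rw [← Int.lt_add_one_iff, Int.floor_lt]; push_cast; linarith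

lemma smF_le {x : K} (hx : x ∈ A.Sol) (hsm : A.ht x ≤ 16 * A.S.card) :
    ∑ v, A.smF x v ≤ 144 * A.S.card := by
  have x0 := A.ne0 x hx
  have x1 := A.ne1 x hx
  have h1 : (∑ v, (A.smF x v : ℝ)) ≤ 144 * A.S.card := by
    calc (∑ v, (A.smF x v : ℝ)) ≤ ∑ v : A.S, 3 * A.rho v x := by
          refine Finset.sum_le_sum fun v _ => ?_
          have h2 := tt_nonneg (A.av v) x x0 x1
          have h3 := tt_le_rr (A.av v) x x0 x1
          have h4 : (A.smF x v : ℝ) ≤ 3 * tt (A.av v) x := Nat.floor_le (by positivity)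
          have h5 := A.one_le_e v
          have h6 : rr (A.av v) x ≤ A.rho v x := by unfold rho; nlinarith
          linarith
      _ = 3 * ∑ v ∈ A.S, A.rho v x := by
        rw [← Finset.mul_sum, Finset.sum_coe_sort A.S (fun v => A.rho v x)]
      _ ≤ 3 * ∑ v, A.rho v x := by
        refine mul_le_mul_of_nonneg_left ?_ (by norm_num)
        exact Finset.sum_le_sum_of_subset_of_nonneg (Finset.subset_univ _)
          (fun v _ _ => A.rho_nonneg v hx)
      _ ≤ _ := by rw [A.sum_rho hx]; linarith
  exact_mod_cast h1

lemma abs_lt_of_floor {a b : ℝ} (ha : 0 ≤ a) (hb : 0 ≤ b) (h : ⌊3 * a⌋₊ = ⌊3 * b⌋₊) :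
    |a - b| < 1 / 3 := by
  have a1 := Nat.floor_le (by positivity : 0 ≤ 3 * a)
  have a2 := Nat.lt_floor_add_one (3 * a)
  have b1 := Nat.floor_le (by positivity : 0 ≤ 3 * b)
  have b2 := Nat.lt_floor_add_one (3 * b)
  rw [h] at a1 a2
  rw [abs_lt]; constructor <;> linarith

lemma abs_lt_of_floor' {a b : ℝ} (h : ⌊3 * a⌋ = ⌊3 * b⌋) : |a - b| < 1 / 3 := by
  have := Int.abs_sub_lt_one_of_floor_eq_floor h
  rw [abs_lt] at this ⊢; constructor <;> linarith [this.1, this.2]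

lemma small_class {x y : K} (hx : x ∈ A.Sol) (hy : y ∈ A.Sol) (hT : A.tyF x = A.tyF y)
    (hF : A.smF x = A.smF y) (hG : A.agF x = A.agF y) : x = y := by
  by_contra hxy
  have hS := A.sameTy_of hT
  have x0 := A.ne0 x hx
  have x1 := A.ne1 x hx
  have y0 := A.ne0 y hy
  have y1 := A.ne1 y hy
  have hpf := A.PF (x - y) (sub_ne_zero.mpr hxy) (by
    intro f hf
    rw [sub_eq_add_neg]
    refine (A.out_nonarch f hf _ _).trans ?_
    rw [f.map_neg, A.out0 x hx f hf, A.out0 y hy f hf, max_self])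
  have harch : ∀ v, A.arch v → Real.log (A.av v (x - y)) <
      Real.log (mm (A.av v) x) + Real.log (mm (A.av v) y) - (rr (A.av v) x + rr (A.av v) y) / 2 := by
    intro v hv
    have hvS := A.arch_S v hv
    refine small_arch (A.av v) (A.σ v) (A.av_arch v hv) x y x0 x1 y0 y1 hxy (A.ty_all hx hy hS v) ?_ ?_
    · exact abs_lt_of_floor (tt_nonneg _ _ x0 x1) (tt_nonneg _ _ y0 y1) (congrFun hF ⟨v, hvS⟩)
    · exact abs_lt_of_floor' (congrFun hG ⟨v, hvS⟩)
  have hnon : ∀ v, ¬ A.arch v → Real.log (A.av v (x - y)) ≤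
      Real.log (mm (A.av v) x) + Real.log (mm (A.av v) y) - (rr (A.av v) x + rr (A.av v) y) / 2 := by
    intro v hv
    have hty := A.ty_all hx hy hS v
    refine small_nonarch (A.av v) (A.nonarch v hv) x y x0 x1 y0 y1 hxy hty ?_
    have : A.av v (zt x (ty (A.av v) x)) = A.av v (zt y (ty (A.av v) y)) := by
      by_cases hvS : v ∈ A.S
      · refine A.disc v hv _ _ (zt_ne x x0 x1 _) (zt_ne y y0 y1 _) ?_
        have := abs_lt_of_floor (tt_nonneg (A.av v) _ x0 x1) (tt_nonneg (A.av v) _ y0 y1) (congrFun hF ⟨v, hvS⟩)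
        rw [abs_sub_comm] at this
        unfold tt at this
        convert this using 2
        ring
      · rw [hty]
        have e0 := A.eq0 x hx y hy v hvS
        have e1 := A.eq1 x hx y hy v hvS
        have : ∀ i, A.av v (Xc x i) = A.av v (Xc y i) := by
          intro i; fin_cases i <;> simp [Xc, e0, e1]
        rw [zt, zt, map_div₀, map_div₀, this, this]
    unfold tt; rw [this]
  have hlt : ∑ v, A.e v * Real.log (A.av v (x - y)) <
      ∑ v, A.e v * (Real.log (mm (A.av v) x) + Real.log (mm (A.av v) y) -
        (rr (A.av v) x + rr (A.av v) y) / 2) := by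
    obtain ⟨v0, hv0⟩ := A.exists_arch
    refine Finset.sum_lt_sum (fun v _ => ?_) ⟨v0, Finset.mem_univ _, ?_⟩
    · refine mul_le_mul_of_nonneg_left ?_ (A.e_pos v).le
      by_cases hv : A.arch v
      · exact (harch v hv).le
      · exact hnon v hv
    · exact mul_lt_mul_of_pos_left (harch v0 hv0) (A.e_pos v0)
  have heq : ∑ v, A.e v * (Real.log (mm (A.av v) x) + Real.log (mm (A.av v) y) -
        (rr (A.av v) x + rr (A.av v) y) / 2) = A.ht x + A.ht y - (∑ v, A.rho v x + ∑ v, A.rho v y) / 2 := by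
    unfold ht rho
    rw [← Finset.sum_add_distrib, ← Finset.sum_add_distrib, Finset.sum_div, ← Finset.sum_sub_distrib]
    refine Finset.sum_congr rfl fun v _ => ?_
    ring
  rw [heq, A.sum_rho hx, A.sum_rho hy] at hlt
  have := A.ht_nonneg x
  have := A.ht_nonneg y
  linarith

lemma small_count (F : Finset K) (hsol : ∀ x ∈ F, x ∈ A.Sol)
    (hsm : ∀ x ∈ F, A.ht x ≤ 16 * (A.S.card : ℝ)) :
    F.card ≤ 3 ^ A.S.card * 20 ^ A.S.card * (144 * A.S.card + A.S.card).choose A.S.card := by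
  obtain ⟨t, ht1, ht2⟩ := comp_count A.S (144 * A.S.card)
  have := Finset.card_le_card_of_injOn (s := F) (fun x => ((A.tyF x, A.agF x), A.smF x))
    (t := ((Finset.univ : Finset (A.S → Fin 3)) ×ˢ
      Fintype.piFinset (fun _ : A.S => Finset.Icc (-10 : ℤ) 9)) ×ˢ t)
    (by
      intro x hx
      simp only [Finset.coe_product, Set.mem_prod, Finset.mem_coe, Finset.mem_univ, true_and,
        Fintype.mem_piFinset]
      exact ⟨fun v => A.agF_mem x v, ht1 _ (A.smF_le (hsol x hx) (hsm x hx))⟩)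
    (by
      intro x hx y hy hxy
      simp only [Prod.mk.injEq] at hxy
      exact A.small_class (hsol x hx) (hsol y hy) hxy.1.1 hxy.2 hxy.1.2)
  refine this.trans ?_
  rw [Finset.card_product, Finset.card_product, Fintype.card_piFinset]
  simp only [Fintype.card_coe] at ht2
  have e : (Finset.univ : Finset (A.S → Fin 3)).card = 3 ^ A.S.card := by
    rw [Finset.card_univ]; simp
  have e2 : ∏ _v : A.S, (Finset.Icc (-10 : ℤ) 9).card = 20 ^ A.S.card := by
    simp
  rw [e, e2]
  gcongr

theorem count (F : Finset K) (hsol : ∀ x ∈ F, x ∈ A.Sol) : F.card + 1 ≤ 2 ^ (16 * A.S.card) := by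
  have h1 := A.big_count (F.filter (fun x => 16 * (A.S.card : ℝ) < A.ht x))
    (fun x hx => hsol x (Finset.mem_filter.mp hx).1) (fun x hx => (Finset.mem_filter.mp hx).2)
  have h2 := A.small_count (F.filter (fun x => ¬ 16 * (A.S.card : ℝ) < A.ht x))
    (fun x hx => hsol x (Finset.mem_filter.mp hx).1)
    (fun x hx => not_lt.mp (Finset.mem_filter.mp hx).2)
  have h3 := Finset.card_filter_add_card_filter_not (s := F) (fun x => 16 * (A.S.card : ℝ) < A.ht x)
  have hs : 1 ≤ A.S.card := by
    obtain ⟨v, hv⟩ := A.exists_arch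
    exact Finset.card_pos.mpr ⟨v, A.arch_S v hv⟩
  have h4 := final_num A.S.card hs
  omega

theorem sol_finite : A.Sol.Finite ∧ A.Sol.ncard + 1 ≤ 2 ^ (16 * A.S.card) := by
  have hfin : A.Sol.Finite := by
    by_contra hinf
    obtain ⟨F, hF, hc⟩ := Set.Infinite.exists_subset_card_eq hinf (2 ^ (16 * A.S.card))
    have := A.count F (fun x hx => hF hx)
    omega
  refine ⟨hfin, ?_⟩
  have := A.count hfin.toFinset (fun x hx => hfin.mem_toFinset.mp hx)
  rwa [← Set.ncard_eq_toFinset_card _ hfin] at this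

end Setup
end Count
end TailBound

namespace TailBound
noncomputable section SUnit

variable {K : Type*} [Field K] [NumberField K]

def fav (v : HeightOneSpectrum (𝓞 K)) : AbsoluteValue K ℝ :=
  NumberField.HeightOneSpectrum.adicAbv K v

lemma fav_na (v : HeightOneSpectrum (𝓞 K)) : IsNonarchimedean (fav v) :=
  NumberField.HeightOneSpectrum.isNonarchimedean_adicAbv K v

lemma fav_congr (v : HeightOneSpectrum (𝓞 K)) {x y : K}
    (h : v.valuation K x = v.valuation K y) : fav v x = fav v y := by
  unfold fav
  rw [NumberField.HeightOneSpectrum.adicAbv_def, NumberField.HeightOneSpectrum.adicAbv_def, h]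

lemma fav_zpow (v : HeightOneSpectrum (𝓞 K)) {x : K} (hx : x ≠ 0) :
    ∃ n : ℤ, fav v x = (Ideal.absNorm v.asIdeal : ℝ) ^ n := by
  have h0 := (v.valuation K).ne_zero_iff.mpr hx
  refine ⟨Multiplicative.toAdd (WithZero.unzero h0), ?_⟩
  unfold fav
  rw [NumberField.HeightOneSpectrum.adicAbv_def, WithZeroMulInt.toNNReal_neg_apply _ h0]
  push_cast
  rfl

lemma fav_disc (v : HeightOneSpectrum (𝓞 K)) (x y : K) (hx : x ≠ 0) (hy : y ≠ 0)
    (h : |Real.log (fav v x) - Real.log (fav v y)| < 1 / 3) : fav v x = fav v y := by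
  obtain ⟨m, hm⟩ := fav_zpow v hx
  obtain ⟨n, hn⟩ := fav_zpow v hy
  have h2 : (2:ℝ) ≤ (Ideal.absNorm v.asIdeal : ℝ) := by
    exact_mod_cast NumberField.HeightOneSpectrum.one_lt_absNorm v
  have hl : (1:ℝ)/3 < Real.log (Ideal.absNorm v.asIdeal : ℝ) := by
    have := Real.log_le_log (by norm_num) h2
    have := Real.log_two_gt_d9
    linarith
  rw [hm, hn, Real.log_zpow, Real.log_zpow, ← sub_mul, abs_mul] at h
  rw [abs_of_pos (by linarith : (0:ℝ) < Real.log _)] at h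
  have : m = n := by
    by_contra hne
    have h1 : (1:ℝ) ≤ |(m:ℝ) - n| := by
      have : 1 ≤ |m - n| := Int.one_le_abs (sub_ne_zero.mpr hne)
      exact_mod_cast this
    nlinarith
  rw [hm, hn, this]

lemma fav_fin {x : K} (hx : x ≠ 0) : {v : HeightOneSpectrum (𝓞 K) | fav v x ≠ 1}.Finite := by
  have := FinitePlace.hasFiniteMulSupport (K := K) hx
  refine (this.preimage (f := FinitePlace.equivHeightOneSpectrum.symm)
    (FinitePlace.equivHeightOneSpectrum.symm.injective.injOn)).subset ?_
  intro v hv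
  simp only [Set.mem_preimage, Function.mem_mulSupport]
  rw [FinitePlace.equivHeightOneSpectrum_symm_apply, FinitePlace.norm_embedding]
  exact hv

lemma prodf {x : K} (hx : x ≠ 0) :
    (∏ w : InfinitePlace K, w x ^ w.mult) * ∏ᶠ v : HeightOneSpectrum (𝓞 K), fav v x = 1 := by
  rw [← prod_abs_eq_one hx]
  congr 1
  rw [← finprod_comp_equiv FinitePlace.equivHeightOneSpectrum.symm]
  refine finprod_congr fun v => ?_
  rw [FinitePlace.equivHeightOneSpectrum_symm_apply, FinitePlace.norm_embedding]
  rfl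

lemma prod_le (T : Finset (HeightOneSpectrum (𝓞 K))) {x : K} (hx : x ≠ 0)
    (h : ∀ v ∉ T, fav v x ≤ 1) :
    0 ≤ ∑ w : InfinitePlace K, (w.mult : ℝ) * Real.log (w x) + ∑ v ∈ T, Real.log (fav v x) := by
  have hp := prodf hx
  rw [finprod_eq_prod_of_mulSupport_subset (s := T ∪ ((fav_fin hx).toFinset \ T)) _ (by
    intro v hv
    simp only [Finset.coe_union, Set.mem_union, Finset.mem_coe, Finset.mem_sdiff,
      Set.Finite.mem_toFinset, Set.mem_setOf_eq]
    by_cases hT : v ∈ T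
    · exact Or.inl hT
    · exact Or.inr ⟨hv, hT⟩)] at hp
  rw [Finset.prod_union Finset.disjoint_sdiff] at hp
  have h1 : ∏ v ∈ (fav_fin hx).toFinset \ T, fav v x ≤ 1 :=
    Finset.prod_le_one (fun v _ => (fav v).nonneg x)
      (fun v hv => h v (Finset.mem_sdiff.mp hv).2)
  have hpos1 : 0 < ∏ w : InfinitePlace K, w x ^ w.mult :=
    Finset.prod_pos fun w _ => pow_pos (w.pos_iff.mpr hx) _
  have hpos2 : 0 < ∏ v ∈ T, fav v x :=
    Finset.prod_pos fun v _ => (fav v).pos hx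
  have h2 : 1 ≤ (∏ w : InfinitePlace K, w x ^ w.mult) * ∏ v ∈ T, fav v x := by
    rw [← hp, ← mul_assoc]
    exact mul_le_of_le_one_right (by positivity) h1
  have h3 := Real.log_nonneg h2
  rw [Real.log_mul hpos1.ne' hpos2.ne', Real.log_prod, Real.log_prod] at h3
  · simpa [Real.log_pow] using h3
  · intro v _; exact ((fav v).pos hx).ne'
  · intro w _; exact (pow_pos (w.pos_iff.mpr hx) _).ne'

theorem sunit (T : Finset (HeightOneSpectrum (𝓞 K))) (Sol : Set K)
    (h0 : ∀ x ∈ Sol, x ≠ 0) (h1 : ∀ x ∈ Sol, x ≠ 1)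
    (e0 : ∀ x ∈ Sol, ∀ y ∈ Sol, ∀ v ∉ T, v.valuation K x = v.valuation K y)
    (e1 : ∀ x ∈ Sol, ∀ y ∈ Sol, ∀ v ∉ T, v.valuation K (1 - x) = v.valuation K (1 - y)) :
    Sol.Finite ∧ Sol.ncard + 1 ≤ 2 ^ (16 * (T.card + Fintype.card (InfinitePlace K))) := by
  rcases Sol.eq_empty_or_nonempty with rfl | ⟨x0, hx0⟩
  · simp [Nat.one_le_two_pow]
  have hz := h0 x0 hx0
  have ho := h1 x0 hx0
  have ho' : 1 - x0 ≠ 0 := sub_ne_zero.mpr ho.symm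
  let T' : Finset (HeightOneSpectrum (𝓞 K)) := T ∪ ((fav_fin hz).toFinset ∪ (fav_fin ho').toFinset)
  have hTT : T ⊆ T' := Finset.subset_union_left
  have hT0 : ∀ v ∉ T', fav v x0 = 1 := by
    intro v hv; by_contra hne; exact hv (by simp [T', hne])
  have hT1 : ∀ v ∉ T', fav v (1 - x0) = 1 := by
    intro v hv; by_contra hne; exact hv (by simp [T', hne])
  let A : Setup K (InfinitePlace K ⊕ {v // v ∈ T'}) :=
    { av := Sum.elim (fun w => w.1) (fun v => fav v.1)
      e := Sum.elim (fun w => (w.mult : ℝ)) (fun _ => 1)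
      one_le_e := by
        rintro (w | v)
        · simp only [Sum.elim_inl]
          exact_mod_cast Nat.succ_le_of_lt w.mult_pos
        · simp
      e_le_two := by
        rintro (w | v)
        · simp only [Sum.elim_inl, InfinitePlace.mult]
          split_ifs <;> norm_num
        · simp
      arch := Sum.elim (fun _ => True) (fun _ => False)
      σ := Sum.elim (fun w => w.embedding) (fun _ => (Classical.arbitrary (InfinitePlace K)).embedding)
      av_arch := by
        rintro (w | v) h z
        · simp only [Sum.elim_inl]
          exact (w.norm_embedding_eq z).symm
        · exact h.elim
      nonarch := by
        rintro (w | v) h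
        · exact (h trivial).elim
        · exact fav_na v.1
      disc := by
        rintro (w | v) h x y hx hy hxy
        · exact (h trivial).elim
        · exact fav_disc v.1 x y hx hy hxy
      S := Finset.univ.disjSum (Finset.univ.filter fun v => v.1 ∈ T)
      arch_S := by
        rintro (w | v) h
        · simp
        · exact h.elim
      exists_arch := ⟨Sum.inl (Classical.arbitrary _), trivial⟩
      Out := {f | ∃ v ∉ T', f = fav v}
      out_nonarch := by rintro f ⟨v, -, rfl⟩; exact fav_na v
      PF := by
        intro D hD h
        have := prod_le T' hD (fun v hv => h _ ⟨v, hv, rfl⟩)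
        rw [Fintype.sum_sum_type]
        simp only [Sum.elim_inl, Sum.elim_inr, one_mul]
        rw [← Finset.sum_coe_sort T'] at this
        exact this
      Sol := Sol
      ne0 := h0
      ne1 := h1
      out0 := by
        rintro x hx f ⟨v, hv, rfl⟩
        rw [← hT0 v hv]
        exact fav_congr v (e0 x hx x0 hx0 v fun h => hv (hTT h))
      out1 := by
        rintro x hx f ⟨v, hv, rfl⟩
        rw [← hT1 v hv]
        exact fav_congr v (e1 x hx x0 hx0 v fun h => hv (hTT h))
      eq0 := by
        rintro x hx y hy (w | v) hv
        · simp at hv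
        · exact fav_congr v.1 (e0 x hx y hy v.1 (by simpa using hv))
      eq1 := by
        rintro x hx y hy (w | v) hv
        · simp at hv
        · exact fav_congr v.1 (e1 x hx y hy v.1 (by simpa using hv)) }
  have hS : A.S.card = T.card + Fintype.card (InfinitePlace K) := by
    change (Finset.univ.disjSum (Finset.univ.filter fun v : {v // v ∈ T'} => v.1 ∈ T)).card = _
    rw [Finset.card_disjSum, add_comm]
    congr 1
    rw [← Finset.card_map ⟨Subtype.val, Subtype.val_injective⟩]
    congr 1
    ext v
    simp only [Finset.mem_map, Finset.mem_filter, Finset.mem_univ, true_and,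
      Function.Embedding.coeFn_mk, Subtype.exists, exists_and_left, exists_prop]
    constructor
    · rintro ⟨a, ha, -, rfl⟩; exact ha
    · intro hv; exact ⟨v, hv, hTT hv, rfl⟩
  have := A.sol_finite
  rwa [hS] at this

end SUnit
end TailBound

namespace TailBound
noncomputable section Forms

/-- exponent vector `(i, d - i)`. -/
def ev2 (d i : ℕ) : Fin 2 →₀ ℕ := Finsupp.single 0 i + Finsupp.single 1 (d - i)

lemma eval2_form {R A : Type*} [CommRing R] [CommRing A] (g : R →+* A) {d : ℕ}
    {F : MvPolynomial (Fin 2) R} (hF : F.IsHomogeneous d) (x y : A) :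
    eval₂ g ![x, y] F = ∑ i ∈ Finset.range (d + 1), g (F.coeff (ev2 d i)) * x ^ i * y ^ (d - i) := by
  rw [eval₂_eq']
  have hinj : Set.InjOn (ev2 d) (Finset.range (d + 1) : Set ℕ) := by
    intro i _ j _ h
    have := DFunLike.congr_fun h 0
    simpa [ev2] using this
  have hsub : F.support ⊆ (Finset.range (d + 1)).image (ev2 d) := by
    intro m hm
    have h := hF (mem_support_iff.mp hm)
    have h' : m 0 + m 1 = d := by
      rw [← h, Finsupp.weight_apply, Finsupp.sum_fintype _ _ (by simp)]
      simp
    rw [Finset.mem_image]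
    refine ⟨m 0, by simp; omega, ?_⟩
    ext i
    fin_cases i
    · simp [ev2]
    · simp [ev2]; omega
  rw [Finset.sum_subset hsub, Finset.sum_image hinj]
  · refine Finset.sum_congr rfl fun i _ => ?_
    simp [ev2, mul_assoc]
  · intro m _ hm
    rw [notMem_support_iff.mp hm]; simp

lemma eval2_smul {R A : Type*} [CommRing R] [CommRing A] (g : R →+* A) {d : ℕ}
    {F : MvPolynomial (Fin 2) R} (hF : F.IsHomogeneous d) (c x y : A) :
    eval₂ g ![c * x, c * y] F = c ^ d * eval₂ g ![x, y] F := by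
  rw [eval2_form g hF, eval2_form g hF, Finset.mul_sum]
  refine Finset.sum_congr rfl fun i hi => ?_
  have : c ^ d = c ^ i * c ^ (d - i) := by
    rw [← pow_add]; congr 1; simp at hi; omega
  rw [mul_pow, mul_pow, this]; ring

/-- a binary form over an algebraically closed field of positive degree has a zero. -/
lemma exists_zero {L : Type*} [Field L] [IsAlgClosed L] {d : ℕ} (hd : 1 ≤ d) (c : ℕ → L) :
    ∃ x y : L, ¬ (x = 0 ∧ y = 0) ∧
      ∑ i ∈ Finset.range (d + 1), c i * x ^ i * y ^ (d - i) = 0 := by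
  by_cases hc : c d = 0
  · refine ⟨1, 0, by simp, Finset.sum_eq_zero fun i hi => ?_⟩
    by_cases h : i = d
    · subst h; simp [hc]
    · rw [zero_pow (by simp at hi; omega)]; simp
  · let p : Polynomial L := ∑ i ∈ Finset.range (d + 1), Polynomial.C (c i) * Polynomial.X ^ i
    have hcoef : p.coeff d = c d := by
      simp [p, Polynomial.coeff_C_mul, Polynomial.coeff_X_pow]
    have hdeg : p.degree ≠ 0 := by
      intro h
      have h2 : (d : WithBot ℕ) ≤ p.degree := Polynomial.le_degree_of_ne_zero (by rw [hcoef]; exact hc)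
      rw [h] at h2
      have : d ≤ 0 := by exact_mod_cast h2
      omega
    obtain ⟨z, hz⟩ := IsAlgClosed.exists_root p hdeg
    refine ⟨z, 1, by simp, ?_⟩
    simpa [p, Polynomial.IsRoot, Polynomial.eval_finsetSum] using hz

/-- a nonzero binary form of degree `d` has at most `d` projective zeros. -/
lemma zeros_le {K : Type*} [Field K] {d : ℕ} (c : ℕ → K) (hc : ∃ i ≤ d, c i ≠ 0)
    (Z : Set (P1 K)) (hZ : ∀ Q ∈ Z,
      ∑ i ∈ Finset.range (d + 1), c i * Q.rep 0 ^ i * Q.rep 1 ^ (d - i) = 0) :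
    Z.Finite ∧ Z.ncard ≤ d := by
  let p : Polynomial K := ∑ i ∈ Finset.range (d + 1), Polynomial.C (c i) * Polynomial.X ^ i
  have hcoef : ∀ i ≤ d, p.coeff i = c i := by
    intro i hi
    simp [p, Polynomial.coeff_C_mul, Polynomial.coeff_X_pow]
    intro h; omega
  have hp : p ≠ 0 := by
    obtain ⟨i, hi, h⟩ := hc
    intro h0
    apply h
    rw [← hcoef i hi, h0]; simp
  have hdeg : p.natDegree ≤ d := by
    refine Polynomial.natDegree_sum_le_of_forall_le _ _ fun i hi => ?_
    exact (Polynomial.natDegree_C_mul_X_pow_le _ _).trans (by simp at hi; omega)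
  have root : ∀ Q ∈ Z, Q.rep 1 ≠ 0 → Q.rep 0 / Q.rep 1 ∈ p.roots.toFinset := by
    intro Q hQ h1
    rw [Multiset.mem_toFinset, Polynomial.mem_roots hp, Polynomial.IsRoot]
    have := hZ Q hQ
    simp only [p, Polynomial.eval_finsetSum, Polynomial.eval_mul, Polynomial.eval_C,
      Polynomial.eval_pow, Polynomial.eval_X]
    have h2 : ∑ i ∈ Finset.range (d + 1), c i * Q.rep 0 ^ i * Q.rep 1 ^ (d - i)
      = Q.rep 1 ^ d * ∑ i ∈ Finset.range (d + 1), c i * (Q.rep 0 / Q.rep 1) ^ i := by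
      rw [Finset.mul_sum]
      refine Finset.sum_congr rfl fun i hi => ?_
      have : Q.rep 1 ^ d = Q.rep 1 ^ i * Q.rep 1 ^ (d - i) := by
        rw [← pow_add]; congr 1; simp at hi; omega
      rw [this, div_pow]; field_simp
    rw [h2] at this
    exact (mul_eq_zero.mp this).resolve_left (pow_ne_zero _ h1)
  let j : P1 K → Option K := fun Q => if Q.rep 1 = 0 then none else some (Q.rep 0 / Q.rep 1)
  have hj : Function.Injective j := by
    intro Q Q' h
    have key : Q.rep 0 * Q'.rep 1 = Q'.rep 0 * Q.rep 1 ∧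
      (Q.rep 1 = 0 ↔ Q'.rep 1 = 0) := by
      by_cases h1 : Q.rep 1 = 0 <;> by_cases h2 : Q'.rep 1 = 0
      · simp [h1, h2]
      · simp [j, h1, h2] at h
      · simp [j, h1, h2] at h
      · simp only [j, h1, h2, if_false, Option.some.injEq] at h
        rw [div_eq_div_iff h1 h2] at h
        exact ⟨h, by simp [h1, h2]⟩
    rw [← Q.mk_rep, ← Q'.mk_rep, Projectivization.mk_eq_mk_iff']
    by_cases h1 : Q.rep 1 = 0
    · have h2 := key.2.mp h1
      have h3 : Q'.rep 0 ≠ 0 := by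
        intro h3
        apply Q'.rep_nonzero
        ext i; fin_cases i <;> simp [h2, h3]
      refine ⟨Q.rep 0 / Q'.rep 0, ?_⟩
      ext i; fin_cases i
      · simp [h3]
      · simp [h1, h2]
    · have h2 : Q'.rep 1 ≠ 0 := fun h => h1 (key.2.mpr h)
      refine ⟨Q.rep 1 / Q'.rep 1, ?_⟩
      ext i; fin_cases i
      · simp; field_simp; linear_combination -key.1
      · simp [h2]
  by_cases hd0 : c d = 0
  · have hdeg' : p.natDegree + 1 ≤ d := by
      by_contra hlt
      have he : p.natDegree = d := by omega
      apply hp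
      rw [← Polynomial.leadingCoeff_eq_zero, Polynomial.leadingCoeff, he, hcoef d le_rfl, hd0]
    have hsub : j '' Z ⊆ ((Finset.insertNone p.roots.toFinset : Finset (Option K)) : Set (Option K)) := by
      rintro _ ⟨Q, hQ, rfl⟩
      by_cases h1 : Q.rep 1 = 0
      · simp [j, h1]
      · have := root Q hQ h1
        simp only [j, h1, if_false, Finset.mem_coe, Finset.some_mem_insertNone]
        exact this
    have hfin : (j '' Z).Finite := (Finset.finite_toSet _).subset hsub
    refine ⟨hfin.of_finite_image hj.injOn, ?_⟩
    rw [← Set.ncard_image_of_injective Z hj]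
    refine (Set.ncard_le_ncard hsub (Finset.finite_toSet _)).trans ?_
    rw [Set.ncard_coe_finset, Finset.card_insertNone]
    exact (Nat.add_le_add_right ((Multiset.toFinset_card_le _).trans p.card_roots') 1).trans hdeg'
  · have hsub : j '' Z ⊆ ((p.roots.toFinset.map Function.Embedding.some : Finset (Option K)) : Set (Option K)) := by
      rintro _ ⟨Q, hQ, rfl⟩
      by_cases h1 : Q.rep 1 = 0
      · exfalso
        have h := hZ Q hQ
        rw [Finset.sum_range_succ, Finset.sum_eq_zero] at h
        · simp only [tsub_self, pow_zero, mul_one, zero_add, mul_eq_zero, hd0, false_or] at h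
          apply Q.rep_nonzero
          ext i; fin_cases i
          · simpa using eq_zero_of_pow_eq_zero h
          · simpa using h1
        · intro i hi
          rw [h1, zero_pow (by simp at hi; omega), mul_zero]
      · have := root Q hQ h1
        simp only [j, h1, if_false, Finset.coe_map, Set.mem_image, Finset.mem_coe]
        exact ⟨_, this, rfl⟩
    have hfin : (j '' Z).Finite := (Finset.finite_toSet _).subset hsub
    refine ⟨hfin.of_finite_image hj.injOn, ?_⟩
    rw [← Set.ncard_image_of_injective Z hj]
    refine (Set.ncard_le_ncard hsub (Finset.finite_toSet _)).trans ?_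
    rw [Set.ncard_coe_finset, Finset.card_map]
    exact ((Multiset.toFinset_card_le _).trans p.card_roots').trans hdeg

variable {K : Type*} [Field K] {d : ℕ}

lemma val_ne (φ : P1Map K d) {x y : K} (h : ![x, y] ≠ 0) :
    ![eval ![x, y] φ.F, eval ![x, y] φ.G] ≠ 0 := by
  intro h0
  have hF : eval ![x, y] φ.F = 0 := by simpa using congrFun h0 0
  have hG : eval ![x, y] φ.G = 0 := by simpa using congrFun h0 1
  have key : ∀ H : MvPolynomial (Fin 2) K, eval ![x, y] H = 0 →
      aeval ![algebraMap K (AlgebraicClosure K) x, algebraMap K (AlgebraicClosure K) y] H = 0 := by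
    intro H hH
    have : (![algebraMap K (AlgebraicClosure K) x, algebraMap K (AlgebraicClosure K) y]
      : Fin 2 → AlgebraicClosure K) = fun i => algebraMap K (AlgebraicClosure K) (![x, y] i) := by
      ext i; fin_cases i <;> simp
    rw [this]
    have h2 := MvPolynomial.aeval_algebraMap_apply (AlgebraicClosure K) ![x, y] H
    have h3 : aeval ![x, y] H = eval ![x, y] H := by rw [aeval_eq_eval]
    rw [h3, hH, map_zero] at h2
    exact h2
  obtain ⟨h1, h2⟩ := φ.coprime _ _ (key _ hF) (key _ hG)
  apply h
  have h1' : x = 0 := by simpa using h1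
  have h2' : y = 0 := by simpa using h2
  simp [h1', h2']

lemma fiber_le (hd : 1 ≤ d) (φ : P1Map K d) (c : P1 K) :
    {Q | φ.toFun Q = c}.Finite ∧ {Q | φ.toFun Q = c}.ncard ≤ d := by
  refine zeros_le (fun i => c.rep 1 * φ.F.coeff (ev2 d i) - c.rep 0 * φ.G.coeff (ev2 d i)) ?_ _ ?_
  · by_contra hcon
    push Not at hcon
    have hab : ∀ x y : AlgebraicClosure K,
        algebraMap K (AlgebraicClosure K) (c.rep 1) * aeval ![x, y] φ.F
          = algebraMap K (AlgebraicClosure K) (c.rep 0) * aeval ![x, y] φ.G := by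
      intro x y
      rw [aeval_def, aeval_def, eval2_form _ φ.homF, eval2_form _ φ.homG, Finset.mul_sum, Finset.mul_sum]
      refine Finset.sum_congr rfl fun i hi => ?_
      have h := hcon i (by simp at hi; omega)
      have h' := congrArg (algebraMap K (AlgebraicClosure K)) h
      simp only [map_sub, map_mul, map_zero] at h'
      linear_combination x ^ i * y ^ (d - i) * h'
    by_cases hb : c.rep 1 = 0
    · have ha : c.rep 0 ≠ 0 := by
        intro ha
        apply c.rep_nonzero
        ext i; fin_cases i <;> simp [ha, hb]
      obtain ⟨x, y, hne, hz⟩ := exists_zero hd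
        (fun i => algebraMap K (AlgebraicClosure K) (φ.F.coeff (ev2 d i)))
      have hF : aeval ![x, y] φ.F = 0 := by
        rw [aeval_def, eval2_form _ φ.homF]; exact hz
      have := hab x y
      rw [hF, mul_zero] at this
      have hG := (mul_eq_zero.mp this.symm).resolve_left (by simpa using ha)
      exact hne (φ.coprime x y hF hG)
    · obtain ⟨x, y, hne, hz⟩ := exists_zero hd
        (fun i => algebraMap K (AlgebraicClosure K) (φ.G.coeff (ev2 d i)))
      have hG : aeval ![x, y] φ.G = 0 := by
        rw [aeval_def, eval2_form _ φ.homG]; exact hz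
      have := hab x y
      rw [hG, mul_zero] at this
      have hF := (mul_eq_zero.mp this).resolve_left (by simpa using hb)
      exact hne (φ.coprime x y hF hG)
  · intro Q hQ
    have hr : ![Q.rep 0, Q.rep 1] = Q.rep := by ext i; fin_cases i <;> simp
    have hne : ![Q.rep 0, Q.rep 1] ≠ 0 := by rw [hr]; exact Q.rep_nonzero
    have h := φ.compat (Q.rep 0) (Q.rep 1) hne (val_ne φ hne)
    have hQ' : Projectivization.mk K ![Q.rep 0, Q.rep 1] hne = Q := by
      simp only [hr]; exact Q.mk_rep
    rw [hQ', show φ.toFun Q = c from hQ] at h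
    have h3 := c.mk_rep.trans h
    rw [Projectivization.mk_eq_mk_iff'] at h3
    obtain ⟨a, ha⟩ := h3
    have h0 := congrFun ha 0
    have h1 := congrFun ha 1
    simp only [Pi.smul_apply, smul_eq_mul, Matrix.cons_val_zero, Matrix.cons_val_one] at h0 h1
    have e1 := eval2_form (RingHom.id K) φ.homF (Q.rep 0) (Q.rep 1)
    have e2 := eval2_form (RingHom.id K) φ.homG (Q.rep 0) (Q.rep 1)
    simp only [RingHom.id_apply] at e1 e2
    have e1' : eval ![Q.rep 0, Q.rep 1] φ.F = eval₂ (RingHom.id K) ![Q.rep 0, Q.rep 1] φ.F := rfl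
    have e2' : eval ![Q.rep 0, Q.rep 1] φ.G = eval₂ (RingHom.id K) ![Q.rep 0, Q.rep 1] φ.G := rfl
    have hsum : ∑ i ∈ Finset.range (d + 1),
        (c.rep 1 * φ.F.coeff (ev2 d i) - c.rep 0 * φ.G.coeff (ev2 d i)) * Q.rep 0 ^ i * Q.rep 1 ^ (d - i)
        = c.rep 1 * eval ![Q.rep 0, Q.rep 1] φ.F - c.rep 0 * eval ![Q.rep 0, Q.rep 1] φ.G := by
      rw [e1', e1, e2', e2, Finset.mul_sum, Finset.mul_sum, ← Finset.sum_sub_distrib]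
      refine Finset.sum_congr rfl fun i _ => ?_
      ring
    rw [hsum, ← h0, ← h1]
    ring

end Forms
end TailBound

namespace TailBound
noncomputable section Dist

section gen
variable {K : Type*} [Field K] {Γ : Type*} [LinearOrderedCommGroupWithZero Γ]
  (w : Valuation K Γ)

def br (p q : Fin 2 → K) : K := p 0 * q 1 - p 1 * q 0

def nrm (p : Fin 2 → K) : Γ := max (w (p 0)) (w (p 1))

def dst (P Q : P1 K) : Γ := w (br P.rep Q.rep) / (nrm w P.rep * nrm w Q.rep)

lemma nrm_ne {p : Fin 2 → K} (hp : p ≠ 0) : nrm w p ≠ 0 := by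
  intro h
  apply hp
  have h0 : w (p 0) = 0 := le_antisymm (h ▸ le_max_left _ _) zero_le
  have h1 : w (p 1) = 0 := le_antisymm (h ▸ le_max_right _ _) zero_le
  rw [map_eq_zero] at h0 h1
  ext i; fin_cases i <;> simp [h0, h1]

lemma nrm_smul (a : K) (p : Fin 2 → K) : nrm w (a • p) = w a * nrm w p := by
  simp only [nrm, Pi.smul_apply, smul_eq_mul, map_mul]
  rcases le_total (w (p 0)) (w (p 1)) with h | h
  · rw [max_eq_right h, max_eq_right (by gcongr)]
  · rw [max_eq_left h, max_eq_left (by gcongr)]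

lemma br_smul (a b : K) (p q : Fin 2 → K) : br (a • p) (b • q) = a * b * br p q := by
  simp [br]; ring

lemma dst_mk {p q : Fin 2 → K} (hp : p ≠ 0) (hq : q ≠ 0) :
    dst w (Projectivization.mk K p hp) (Projectivization.mk K q hq)
      = w (br p q) / (nrm w p * nrm w q) := by
  obtain ⟨a, ha⟩ := Projectivization.exists_smul_eq_mk_rep K p hp
  obtain ⟨b, hb⟩ := Projectivization.exists_smul_eq_mk_rep K q hq
  have ha' : (Projectivization.mk K p hp).rep = (a : K) • p := ha.symm
  have hb' : (Projectivization.mk K q hq).rep = (b : K) • q := hb.symm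
  unfold dst
  rw [ha', hb', br_smul, nrm_smul, nrm_smul]
  have h1 : w (a : K) ≠ 0 := by simp
  have h2 : w (b : K) ≠ 0 := by simp
  have h3 := nrm_ne w hp
  have h4 := nrm_ne w hq
  simp only [map_mul]
  field_simp

lemma dst_mul (P Q : P1 K) :
    dst w P Q * (nrm w P.rep * nrm w Q.rep) = w (br P.rep Q.rep) := by
  have h3 := nrm_ne w P.rep_nonzero
  have h4 := nrm_ne w Q.rep_nonzero
  unfold dst
  field_simp

lemma dst_comm (P Q : P1 K) : dst w P Q = dst w Q P := by
  unfold dst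
  have : br P.rep Q.rep = - br Q.rep P.rep := by simp [br]; ring
  rw [this, Valuation.map_neg, mul_comm (nrm w P.rep)]

lemma br_eq_zero {P Q : P1 K} (h : br P.rep Q.rep = 0) : P = Q := by
  unfold br at h
  rw [← P.mk_rep, ← Q.mk_rep, Projectivization.mk_eq_mk_iff']
  by_cases h0 : Q.rep 0 = 0
  · have h1 : Q.rep 1 ≠ 0 := by
      intro h1
      apply Q.rep_nonzero
      ext i; fin_cases i <;> simp [h0, h1]
    have h2 : P.rep 0 = 0 := by
      rw [h0, mul_zero, sub_zero] at h
      exact (mul_eq_zero.mp h).resolve_right h1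
    refine ⟨P.rep 1 / Q.rep 1, ?_⟩
    ext i; fin_cases i
    · simp [h0, h2]
    · simp [h1]
  · refine ⟨P.rep 0 / Q.rep 0, ?_⟩
    ext i; fin_cases i
    · simp [h0]
    · simp; field_simp; linear_combination h

lemma dst_ne {P Q : P1 K} (h : P ≠ Q) : dst w P Q ≠ 0 := by
  unfold dst
  refine div_ne_zero ?_ (mul_ne_zero (nrm_ne w P.rep_nonzero) (nrm_ne w Q.rep_nonzero))
  rw [Valuation.ne_zero_iff]
  exact fun h0 => h (br_eq_zero h0)

lemma exists_nrep (P : P1 K) : ∃ p : Fin 2 → K, ∃ hp : p ≠ 0,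
    Projectivization.mk K p hp = P ∧ nrm w p = 1 := by
  have h0 := nrm_ne w P.rep_nonzero
  obtain ⟨a, ha⟩ : ∃ a : K, w a = nrm w P.rep := by
    rcases max_choice (w (P.rep 0)) (w (P.rep 1)) with h | h
    · exact ⟨_, h.symm⟩
    · exact ⟨_, h.symm⟩
  have ha0 : a ≠ 0 := by
    rintro rfl; rw [map_zero] at ha; exact h0 ha.symm
  have hp : a⁻¹ • P.rep ≠ 0 := smul_ne_zero (inv_ne_zero ha0) P.rep_nonzero
  refine ⟨a⁻¹ • P.rep, hp, ?_, ?_⟩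
  · conv_rhs => rw [← P.mk_rep]
    rw [Projectivization.mk_eq_mk_iff']
    exact ⟨a⁻¹, rfl⟩
  · rw [nrm_smul, map_inv₀, ha, inv_mul_cancel₀ h0]

lemma dst_tri (P Q R : P1 K) : dst w P R ≤ max (dst w P Q) (dst w Q R) := by
  obtain ⟨p, hp, rfl, np⟩ := exists_nrep w P
  obtain ⟨q, hq, rfl, nq⟩ := exists_nrep w Q
  obtain ⟨r, hr, rfl, nr⟩ := exists_nrep w R
  rw [dst_mk, dst_mk, dst_mk, np, nq, nr]
  simp only [mul_one, div_one]
  have hp0 : ∀ i, w (p i) ≤ 1 := by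
    intro i; rw [← np]; fin_cases i
    · exact le_max_left _ _
    · exact le_max_right _ _
  have hr0 : ∀ i, w (r i) ≤ 1 := by
    intro i; rw [← nr]; fin_cases i
    · exact le_max_left _ _
    · exact le_max_right _ _
  obtain ⟨i, hi⟩ : ∃ i, w (q i) = 1 := by
    rcases max_choice (w (q 0)) (w (q 1)) with h | h
    · exact ⟨0, h.symm.trans nq⟩
    · exact ⟨1, h.symm.trans nq⟩
  have hid : q i * br p r = br p q * r i + br q r * p i := by
    fin_cases i <;> simp [br] <;> ring
  have : w (br p r) = w (br p q * r i + br q r * p i) := by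
    rw [← hid, map_mul, hi, one_mul]
  rw [this]
  refine (w.map_add _ _).trans (max_le_max ?_ ?_)
  · rw [map_mul]; exact mul_le_of_le_one_right' (hr0 i)
  · rw [map_mul]; exact mul_le_of_le_one_right' (hp0 i)

end gen

lemma form_dvd {O : Type*} [CommRing O] {d : ℕ} {F G : MvPolynomial (Fin 2) O}
    (hF : F.IsHomogeneous d) (hG : G.IsHomogeneous d) (a b a' b' : O)
    (hu : IsUnit a ∨ IsUnit b) :
    a * b' - b * a' ∣ eval ![a, b] F * eval ![a', b'] G - eval ![a, b] G * eval ![a', b'] F := by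
  set D := a * b' - b * a' with hD
  rw [← Ideal.mem_span_singleton, ← Ideal.Quotient.eq_zero_iff_mem]
  set π := Ideal.Quotient.mk (Ideal.span {D}) with hπ
  have hD0 : π a * π b' - π b * π a' = 0 := by
    rw [← map_mul, ← map_mul, ← map_sub, ← hD, hπ, Ideal.Quotient.eq_zero_iff_mem]
    exact Ideal.mem_span_singleton_self D
  have hev : ∀ (H : MvPolynomial (Fin 2) O) (x y : O),
      π (eval ![x, y] H) = eval₂ π ![π x, π y] H := by
    intro H x y
    have h := MvPolynomial.eval₂_comp_left π (RingHom.id O) ![x, y] H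
    have h2 : (π ∘ ![x, y]) = ![π x, π y] := by ext i; fin_cases i <;> simp
    rw [h2] at h
    exact h
  obtain ⟨c, h1, h2⟩ : ∃ c, π a' = c * π a ∧ π b' = c * π b := by
    rcases hu with hu | hu
    · obtain ⟨u, hu⟩ := (hu.map π)
      refine ⟨π a' * (u⁻¹ : Units _), ?_, ?_⟩
      · rw [← hu, Units.inv_mul_cancel_right]
      · have : π b' = π b' * u * (u⁻¹ : Units _) := by rw [Units.mul_inv_cancel_right]
        rw [this, hu]
        linear_combination (↑u⁻¹) * hD0
    · obtain ⟨u, hu⟩ := (hu.map π)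
      refine ⟨π b' * (u⁻¹ : Units _), ?_, ?_⟩
      · have : π a' = π a' * u * (u⁻¹ : Units _) := by rw [Units.mul_inv_cancel_right]
        rw [this, hu]
        linear_combination -(↑u⁻¹) * hD0
      · rw [← hu, Units.inv_mul_cancel_right]
  rw [map_sub, map_mul, map_mul, hev, hev, hev, hev, h1, h2, eval2_smul π hF, eval2_smul π hG]
  ring

lemma val_unit {K : Type*} [Field K] {Γ : Type*} [LinearOrderedCommGroupWithZero Γ]
    (w : Valuation K Γ) (a : w.valuationSubring) : IsUnit a ↔ w (a : K) = 1 := by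
  constructor
  · intro h
    obtain ⟨b, hb⟩ := h.exists_right_inv
    have h1 : (a : K) * (b : K) = 1 := by
      have := congrArg (fun t : w.valuationSubring => (t : K)) hb
      simpa using this
    have h2 : w (a : K) * w (b : K) = 1 := by rw [← map_mul, h1, map_one]
    have ha : w (a : K) ≤ 1 := a.2
    have hb : w (b : K) ≤ 1 := b.2
    refine le_antisymm ha ?_
    rw [← h2]
    exact mul_le_of_le_one_right' hb
  · intro h
    have ha : (a : K) ≠ 0 := by
      intro h0; rw [h0, map_zero] at h; exact zero_ne_one h
    have hb : w ((a : K)⁻¹) ≤ 1 := by rw [map_inv₀, h, inv_one]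
    refine IsUnit.of_mul_eq_one (⟨(a : K)⁻¹, hb⟩ : w.valuationSubring) ?_
    apply Subtype.ext
    exact mul_inv_cancel₀ ha

lemma unit_val {O L : Type*} [CommSemiring O] [CommSemiring L] (F₀ G₀ : MvPolynomial (Fin 2) O) (ρ : O →+* L)
    (hz : ∀ x y : L, eval ![x, y] (MvPolynomial.map ρ F₀) = 0 →
        eval ![x, y] (MvPolynomial.map ρ G₀) = 0 → x = 0 ∧ y = 0)
    (hρ : ∀ z, ρ z = 0 ↔ ¬ IsUnit z) {a b : O} (hu : IsUnit a ∨ IsUnit b) :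
    IsUnit (eval ![a, b] F₀) ∨ IsUnit (eval ![a, b] G₀) := by
  by_contra hcon
  push Not at hcon
  have gen : ∀ H : MvPolynomial (Fin 2) O,
        eval ![ρ a, ρ b] (MvPolynomial.map ρ H) = ρ (eval ![a, b] H) := by
    intro H
    rw [eval_map]
    have h := MvPolynomial.eval₂_comp_left ρ (RingHom.id _) ![a, b] H
    have h2 : (ρ ∘ ![a, b]) = ![ρ a, ρ b] := by ext i; fin_cases i <;> simp
    rw [h2] at h
    exact h.symm
  have := hz _ _ ((gen F₀).trans ((hρ _).mpr hcon.1)) ((gen G₀).trans ((hρ _).mpr hcon.2))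
  rw [hρ, hρ] at this
  tauto

lemma unit_val2 {K : Type*} [Field K] (O : ValuationSubring K) (F₀ G₀ : MvPolynomial (Fin 2) O)
    (hz : ∀ x y : AlgebraicClosure (IsLocalRing.ResidueField O),
        eval ![x, y] (MvPolynomial.map
          ((algebraMap (IsLocalRing.ResidueField O)
              (AlgebraicClosure _)).comp
            (IsLocalRing.residue _)) F₀) = 0 →
        eval ![x, y] (MvPolynomial.map
          ((algebraMap (IsLocalRing.ResidueField O)
              (AlgebraicClosure _)).comp
            (IsLocalRing.residue _)) G₀) = 0 →
        x = 0 ∧ y = 0) {a b : O} (hu : IsUnit a ∨ IsUnit b) :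
    IsUnit (eval ![a, b] F₀) ∨ IsUnit (eval ![a, b] G₀) := by
  refine unit_val F₀ G₀ ((algebraMap (IsLocalRing.ResidueField O)
              (AlgebraicClosure (IsLocalRing.ResidueField O))).comp
            (IsLocalRing.residue O)) ?_ ?_ hu
  · exact hz
  intro z
  rw [RingHom.comp_apply]
  rw [map_eq_zero]
  rw [IsLocalRing.residue_eq_zero_iff]
  exact Iff.rfl

variable {K : Type*} [Field K] {d : ℕ} {Γ : Type*} [LinearOrderedCommGroupWithZero Γ]

lemma eval_img (φ : P1Map K d) (w : Valuation K Γ) {c : K} (hc : c ≠ 0)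
    (F₀ G₀ : MvPolynomial (Fin 2) w.valuationSubring)
    (hF : MvPolynomial.map (w.valuationSubring.subtype) F₀ = C c * φ.F)
    (hG : MvPolynomial.map (w.valuationSubring.subtype) G₀ = C c * φ.G)
    (hz : ∀ x y : AlgebraicClosure
          (IsLocalRing.ResidueField w.valuationSubring),
        eval ![x, y] (MvPolynomial.map
          ((algebraMap (IsLocalRing.ResidueField w.valuationSubring)
              (AlgebraicClosure _)).comp
            (IsLocalRing.residue _)) F₀) = 0 →
        eval ![x, y] (MvPolynomial.map
          ((algebraMap (IsLocalRing.ResidueField w.valuationSubring)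
              (AlgebraicClosure _)).comp
            (IsLocalRing.residue _)) G₀) = 0 →
        x = 0 ∧ y = 0)
    (P : P1 K) :
    ∃ a b : w.valuationSubring, ∃ hp : ![(a : K), (b : K)] ≠ 0,
      ∃ hp' : ![((eval ![a, b] F₀ : w.valuationSubring) : K),
        ((eval ![a, b] G₀ : w.valuationSubring) : K)] ≠ 0,
      Projectivization.mk K _ hp = P ∧ nrm w ![(a : K), (b : K)] = 1 ∧
      (IsUnit a ∨ IsUnit b) ∧
      Projectivization.mk K _ hp' = φ.toFun P ∧
      nrm w ![((eval ![a, b] F₀ : w.valuationSubring) : K),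
        ((eval ![a, b] G₀ : w.valuationSubring) : K)] = 1 := by
  have unit_iff : ∀ a : w.valuationSubring, IsUnit a ↔ w (a : K) = 1 := by
    exact val_unit w
  have nrm1 : ∀ a b : w.valuationSubring, (IsUnit a ∨ IsUnit b) ↔ nrm w ![(a : K), (b : K)] = 1 := by
    intro a b
    have ha : w (a : K) ≤ 1 := a.2
    have hb : w (b : K) ≤ 1 := b.2
    rw [unit_iff, unit_iff]
    simp only [nrm, Matrix.cons_val_zero, Matrix.cons_val_one]
    constructor
    · rintro (h | h)
      · rw [h]; exact max_eq_left hb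
      · rw [h]; exact max_eq_right ha
    · intro h
      rcases max_choice (w (a : K)) (w (b : K)) with h' | h'
      · exact Or.inl (h'.symm.trans h)
      · exact Or.inr (h'.symm.trans h)
  obtain ⟨p, hp, hP, np⟩ := exists_nrep w P
  have hp0 : w (p 0) ≤ 1 := np ▸ le_max_left _ _
  have hp1 : w (p 1) ≤ 1 := np ▸ le_max_right _ _
  let a : w.valuationSubring := ⟨p 0, hp0⟩
  let b : w.valuationSubring := ⟨p 1, hp1⟩
  have hab : ![(a : K), (b : K)] = p := by ext i; fin_cases i <;> simp [a, b]
  have hu : IsUnit a ∨ IsUnit b := by rw [nrm1, hab]; exact np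
  have hu' : IsUnit (eval ![a, b] F₀) ∨ IsUnit (eval ![a, b] G₀) := by
    exact unit_val2 _ F₀ G₀ hz hu
  have hn' := (nrm1 _ _).mp hu'
  have hne' : ![((eval ![a, b] F₀ : w.valuationSubring) : K), ((eval ![a, b] G₀ : w.valuationSubring) : K)] ≠ 0 := by
    intro h
    rw [h] at hn'
    simp [nrm] at hn'
  have hne : ![(a : K), (b : K)] ≠ 0 := by rw [hab]; exact hp
  have hP' : Projectivization.mk K ![(a : K), (b : K)] hne = P := by
    rw [← hP]; congr 1
  refine ⟨a, b, hne, hne', hP', (nrm1 a b).mp hu, hu, ?_, hn'⟩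
  rw [← hP', φ.compat _ _ hne (val_ne φ hne), Projectivization.mk_eq_mk_iff']
  have hev : ∀ (H₀ : MvPolynomial (Fin 2) w.valuationSubring) (H : MvPolynomial (Fin 2) K),
      MvPolynomial.map w.valuationSubring.subtype H₀ = C c * H →
      ((eval ![a, b] H₀ : w.valuationSubring) : K) = c * eval ![(a : K), (b : K)] H := by
    intro H₀ H h
    have h1 := congrArg (eval ![(a : K), (b : K)]) h
    rw [eval_map, map_mul, eval_C] at h1
    rw [← h1]
    have h := MvPolynomial.eval₂_comp_left w.valuationSubring.subtype (RingHom.id _) ![a, b] H₀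
    have h2 : (w.valuationSubring.subtype ∘ ![a, b]) = ![(a : K), (b : K)] := by
      ext i; fin_cases i <;> simp
    rw [h2] at h
    exact h
  refine ⟨c, ?_⟩
  ext i; fin_cases i
  · simpa using (hev F₀ φ.F hF).symm
  · simpa using (hev G₀ φ.G hG).symm

lemma contract_aux (φ : P1Map K d) (w : Valuation K Γ) {c : K} (hc : c ≠ 0)
    (F₀ G₀ : MvPolynomial (Fin 2) w.valuationSubring)
    (hF : MvPolynomial.map (w.valuationSubring.subtype) F₀ = C c * φ.F)
    (hG : MvPolynomial.map (w.valuationSubring.subtype) G₀ = C c * φ.G)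
    (hz : ∀ x y : AlgebraicClosure
          (IsLocalRing.ResidueField w.valuationSubring),
        eval ![x, y] (MvPolynomial.map
          ((algebraMap (IsLocalRing.ResidueField w.valuationSubring)
              (AlgebraicClosure _)).comp
            (IsLocalRing.residue _)) F₀) = 0 →
        eval ![x, y] (MvPolynomial.map
          ((algebraMap (IsLocalRing.ResidueField w.valuationSubring)
              (AlgebraicClosure _)).comp
            (IsLocalRing.residue _)) G₀) = 0 →
        x = 0 ∧ y = 0)
    (P Q : P1 K) :
    dst w (φ.toFun P) (φ.toFun Q) ≤ dst w P Q := by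
  have homF : F₀.IsHomogeneous d := by
    refine IsHomogeneous.of_map (f := w.valuationSubring.subtype) Subtype.val_injective ?_
    rw [hF]
    simpa using (isHomogeneous_C (Fin 2) c).mul φ.homF
  have homG : G₀.IsHomogeneous d := by
    refine IsHomogeneous.of_map (f := w.valuationSubring.subtype) Subtype.val_injective ?_
    rw [hG]
    simpa using (isHomogeneous_C (Fin 2) c).mul φ.homG
  obtain ⟨a, b, hp, hp', rfl, n1, hu, e1, n1'⟩ := eval_img φ w hc F₀ G₀ hF hG hz P
  obtain ⟨a', b', hq, hq', rfl, n2, hu2, e2, n2'⟩ := eval_img φ w hc F₀ G₀ hF hG hz Q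
  rw [← e1, ← e2, dst_mk, dst_mk, n1, n1', n2, n2']
  simp only [mul_one, div_one, br, Matrix.cons_val_zero, Matrix.cons_val_one]
  obtain ⟨z, hz⟩ := form_dvd homF homG a b a' b' hu
  have hz' := congrArg (fun t : w.valuationSubring => (t : K)) hz
  push_cast at hz'
  rw [hz', map_mul]
  exact mul_le_of_le_one_right' z.2

lemma contract [NumberField K] (φ : P1Map K d) (v : HeightOneSpectrum (𝓞 K))
    (h : GoodReductionAt φ v) (P Q : P1 K) :
    dst (v.valuation K) (φ.toFun P) (φ.toFun Q) ≤ dst (v.valuation K) P Q := by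
  obtain ⟨c, hc, F₀, G₀, hF, hG, -, hz⟩ := h
  exact contract_aux φ (v.valuation K) hc F₀ G₀ hF hG hz P Q

end Dist
end TailBound

namespace TailBound
section Dyn

lemma ultra_abs {α Γ : Type*} [LinearOrder Γ] (D : α → α → Γ)
    (hs : ∀ x y, D x y = D y x) (ht : ∀ x y z, D x z ≤ max (D x y) (D y z))
    (g h : α → α) (hg : ∀ x y, D (g x) (g y) ≤ D x y) (hh : ∀ x y, D (h x) (h y) ≤ D x y)
    {Q U c c3 cQ : α} (gQ : g Q = U) (gU : g U = c3) (gc : g c = c3) (gc3 : g c3 = cQ)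
    (gcQ : g cQ = c) (hU : h U = c) (hc3 : h c3 = c3) (hcQ : h cQ = cQ) :
    D Q c3 = D Q U ∧ D Q c = D Q U := by
  have a1 := hg c c3
  have a2 := hg c3 cQ
  have a3 := hg cQ c
  rw [gc, gc3] at a1
  rw [gc3, gcQ] at a2
  rw [gcQ, gc] at a3
  have b1 := hh U c3
  have b2 := hh U cQ
  rw [hU, hc3] at b1
  rw [hU, hcQ] at b2
  have c1 := hg Q cQ
  have c2 := hg Q U
  rw [gQ, gcQ] at c1
  rw [gQ, gU] at c2
  have d1 := hg Q c3
  have d2 := hg Q c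
  rw [gQ, gc3] at d1
  rw [gQ, gc] at d2
  rw [hs c cQ] at b2
  have e1 := ht Q c c3
  have e2 := ht Q c3 c
  rw [hs c3 c] at e2
  have e3 := ht U c3 cQ
  have e4 := ht U cQ c3
  rw [hs cQ c3] at e4
  have e5 := ht U c c3
  have e6 := ht Q c3 cQ
  have e7 := ht Q c3 U
  rw [hs c3 U] at e7
  have e8 := ht Q U c3
  have e9 := ht U c c3
  have e10 := ht U c3 c
  have e11 := ht U cQ c
  have e12 := ht Q cQ c3
  rw [hs cQ c3] at e12
  generalize D Q c3 = x1 at *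
  generalize D Q c = x2 at *
  generalize D Q U = x3 at *
  generalize D Q cQ = x4 at *
  generalize D U c3 = x5 at *
  generalize D U c = x6 at *
  generalize D U cQ = x7 at *
  generalize D c c3 = x8 at *
  generalize D c3 cQ = x9 at *
  generalize D cQ c = x10 at *
  clear gQ gU gc gc3 gcQ hU hc3 hcQ hg hh ht hs
  simp only [le_max_iff] at *
  have h89 : x8 = x9 := le_antisymm (a3.trans a2) a1
  have h810 : x8 = x10 := le_antisymm a3 (a2.trans a1)
  subst h89 h810
  have hf : x1 = x2 := by
    apply le_antisymm
    · rcases e1 with h | h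
      · exact h
      · exact h.trans (b1.trans d2)
    · rcases e2 with h | h
      · exact h
      · exact h.trans (b2.trans d1)
  subst hf
  have : x1 = x3 := by grind
  exact ⟨this, this⟩

variable {K : Type*} [Field K] [NumberField K]

lemma cross (T : Finset (HeightOneSpectrum (𝓞 K))) (U C D : P1 K) (hUC : U ≠ C) (hUD : U ≠ D)
    (hCD : C ≠ D) (A : Set (P1 K)) (hA : ∀ Q ∈ A, Q ≠ U ∧ Q ≠ C ∧ Q ≠ D)
    (hd : ∀ Q ∈ A, ∀ v ∉ T, dst (v.valuation K) Q D = dst (v.valuation K) Q U ∧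
      dst (v.valuation K) Q C = dst (v.valuation K) Q U) :
    A.Finite ∧ A.ncard + 1 ≤ Bconst (sCard K T) := by
  have bne : ∀ {X Y : P1 K}, X ≠ Y → br X.rep Y.rep ≠ 0 := fun h h' => h (br_eq_zero h')
  let x : P1 K → K := fun Q =>
    br U.rep C.rep * br Q.rep D.rep / (br U.rep D.rep * br Q.rep C.rep)
  have hx1 : ∀ Q ∈ A, 1 - x Q =
      br C.rep D.rep * br Q.rep U.rep / (br U.rep D.rep * br Q.rep C.rep) := by
    intro Q hQ
    have h1 := bne hUD
    have h2 := bne (hA Q hQ).2.1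
    simp only [x]
    rw [eq_div_iff (mul_ne_zero h1 h2), sub_mul, div_mul_cancel₀ _ (mul_ne_zero h1 h2)]
    simp only [br]; ring
  have hv0 : ∀ Q ∈ A, ∀ v ∉ T, v.valuation K (x Q) =
      dst (v.valuation K) U C / dst (v.valuation K) U D := by
    intro Q hQ v hv
    obtain ⟨e1, e2⟩ := hd Q hQ v hv
    have h1 := nrm_ne (v.valuation K) Q.rep_nonzero
    have h2 := nrm_ne (v.valuation K) U.rep_nonzero
    have h3 := nrm_ne (v.valuation K) C.rep_nonzero
    have h4 := nrm_ne (v.valuation K) D.rep_nonzero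
    have h5 := dst_ne (v.valuation K) hUD
    have h6 := dst_ne (v.valuation K) (hA Q hQ).1
    simp only [x]
    rw [map_div₀, map_mul, map_mul, ← dst_mul, ← dst_mul, ← dst_mul, ← dst_mul, e1, e2]
    field_simp
  have hv1 : ∀ Q ∈ A, ∀ v ∉ T, v.valuation K (1 - x Q) =
      dst (v.valuation K) C D / dst (v.valuation K) U D := by
    intro Q hQ v hv
    obtain ⟨e1, e2⟩ := hd Q hQ v hv
    have h1 := nrm_ne (v.valuation K) Q.rep_nonzero
    have h2 := nrm_ne (v.valuation K) U.rep_nonzero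
    have h3 := nrm_ne (v.valuation K) C.rep_nonzero
    have h4 := nrm_ne (v.valuation K) D.rep_nonzero
    have h5 := dst_ne (v.valuation K) hUD
    have h6 := dst_ne (v.valuation K) (hA Q hQ).1
    rw [hx1 Q hQ]
    rw [map_div₀, map_mul, map_mul, ← dst_mul, ← dst_mul, ← dst_mul, ← dst_mul, e2]
    field_simp
  have hinj : Set.InjOn x A := by
    intro Q hQ Q' hQ' h
    simp only [x] at h
    have h1 := bne hUD
    have h2 := bne (hA Q hQ).2.1
    have h3 := bne (hA Q' hQ').2.1
    have h4 := bne hUC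
    rw [div_eq_div_iff (mul_ne_zero h1 h2) (mul_ne_zero h1 h3)] at h
    have h5 : br U.rep C.rep * br U.rep D.rep * (br Q.rep D.rep * br Q'.rep C.rep)
        = br U.rep C.rep * br U.rep D.rep * (br Q'.rep D.rep * br Q.rep C.rep) := by
      linear_combination h
    have h6 := mul_left_cancel₀ (mul_ne_zero h4 h1) h5
    have h7 : br Q.rep Q'.rep * br C.rep D.rep = 0 := by
      simp only [br] at h6 ⊢
      linear_combination -h6
    exact br_eq_zero ((mul_eq_zero.mp h7).resolve_right (bne hCD))
  have key := sunit T (x '' A)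
    (by rintro _ ⟨Q, hQ, rfl⟩
        exact div_ne_zero (mul_ne_zero (bne hUC) (bne (hA Q hQ).2.2))
          (mul_ne_zero (bne hUD) (bne (hA Q hQ).2.1)))
    (by rintro _ ⟨Q, hQ, rfl⟩ h
        have := hx1 Q hQ
        rw [h, sub_self] at this
        exact div_ne_zero (mul_ne_zero (bne hCD) (bne (hA Q hQ).1))
          (mul_ne_zero (bne hUD) (bne (hA Q hQ).2.1)) this.symm)
    (by rintro _ ⟨Q, hQ, rfl⟩ _ ⟨Q', hQ', rfl⟩ v hv
        rw [hv0 Q hQ v hv, hv0 Q' hQ' v hv])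
    (by rintro _ ⟨Q, hQ, rfl⟩ _ ⟨Q', hQ', rfl⟩ v hv
        rw [hv1 Q hQ v hv, hv1 Q' hQ' v hv])
  refine ⟨Set.Finite.of_finite_image key.1 hinj, ?_⟩
  rw [← hinj.ncard_image]
  exact key.2

lemma contract_it {d : ℕ} (φ : P1Map K d) (v : HeightOneSpectrum (𝓞 K))
    (h : GoodReductionAt φ v) (n : ℕ) (X Y : P1 K) :
    dst (v.valuation K) (φ.toFun^[n] X) (φ.toFun^[n] Y) ≤ dst (v.valuation K) X Y := by
  induction n with
  | zero => exact le_rfl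
  | succ n ih =>
    rw [Function.iterate_succ_apply', Function.iterate_succ_apply']
    exact (contract φ v h _ _).trans ih

/-- points reaching `U` in `k ≡ r mod 3` steps with `f^[k] U` in the cycle. -/
def ASet {d : ℕ} (φ : P1Map K d) (r : ℕ) (U : P1 K) : Set (P1 K) :=
  {Q | ∃ k, k % 3 = r ∧ φ.toFun^[k] Q = U ∧
    φ.toFun^[3] (φ.toFun^[k] U) = φ.toFun^[k] U}

lemma it3 {α : Type*} (f : α → α) {x : α} (h : f^[3] x = x) (n : ℕ) :
    f^[3] (f^[n] x) = f^[n] x := by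
  rw [← Function.iterate_add_apply, Nat.add_comm, Function.iterate_add_apply, h]

lemma itmod {α : Type*} (f : α → α) {x : α} (h : f^[3] x = x) (n : ℕ) :
    f^[n] x = f^[n % 3] x := by
  have : Function.IsPeriodicPt f 3 x := h
  exact (this.iterate_mod_apply n).symm

lemma ASet_bound {d : ℕ} (φ : P1Map K d) (T : Finset (HeightOneSpectrum (𝓞 K)))
    (hgr : GoodReductionOutside φ T) (r : ℕ) (U : P1 K) (hU : ¬ IsPeriodicPoint φ U)
    (h2 : φ.toFun^[3] (φ.toFun^[3] U) = φ.toFun^[3] U)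
    (hne : φ.toFun^[3] U ≠ φ.toFun^[r] (φ.toFun^[3] U)) :
    (ASet φ r U).Finite ∧ (ASet φ r U).ncard + 1 ≤ Bconst (sCard K T) := by
  set f := φ.toFun with hf
  have per : ∀ X : P1 K, f^[3] X = X → IsPeriodicPoint φ X := fun X h => ⟨3, by norm_num, h⟩
  have nper : ∀ k Q, f^[k] Q = U → ¬ IsPeriodicPoint φ Q := by
    rintro k Q hQ ⟨n, hn, h⟩
    refine hU ⟨n, hn, ?_⟩
    rw [← hQ, ← hf, ← Function.iterate_add_apply, Nat.add_comm, Function.iterate_add_apply, h]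
  refine cross T U (f^[3] U) (f^[r] (f^[3] U)) ?_ ?_ hne _ ?_ ?_
  · intro h; exact hU (h ▸ per _ h2)
  · intro h; exact hU (h ▸ per _ (it3 f h2 r))
  · rintro Q ⟨k, hk, hQ, hkU⟩
    have hn := nper k Q hQ
    refine ⟨?_, ?_, ?_⟩
    · intro h
      rw [h] at hQ
      rcases Nat.eq_zero_or_pos k with h0 | h0
      · subst h0
        apply hne
        rw [← hk]; rfl
      · exact hU ⟨k, h0, hQ⟩
    · intro h; exact hn (h ▸ per _ h2)
    · intro h; exact hn (h ▸ per _ (it3 f h2 r))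
  · rintro Q ⟨k, hk, hQ, hkU⟩ v hv
    have hg := hgr v hv
    have hc : f^[k] (f^[3] U) = f^[r] (f^[3] U) := by rw [itmod f h2 k, hk]
    have hkk : f^[k] U = f^[r] (f^[3] U) := by
      rw [← hc, ← hkU, ← Function.iterate_add_apply, ← Function.iterate_add_apply, Nat.add_comm]
    refine ultra_abs (dst (v.valuation K)) (dst_comm _) (dst_tri _) (f^[k]) (f^[3])
      (contract_it φ v hg k) (contract_it φ v hg 3) (cQ := f^[k] (f^[k] (f^[3] U))) hQ hkk hc
      (by rw [hc]) ?_ rfl (it3 f h2 r) (it3 f (it3 f h2 k) k)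
    rw [← Function.iterate_add_apply, ← Function.iterate_add_apply, itmod f h2]
    have : (k + k + k) % 3 = 0 := by omega
    simp [this]

lemma ncard_bU {α β : Type*} {s : Set α} {t : α → Set β} {m n : ℕ} (hs : s.Finite)
    (hm : s.ncard ≤ m) (h : ∀ x ∈ s, (t x).Finite ∧ (t x).ncard ≤ n) :
    (⋃ x ∈ s, t x).Finite ∧ (⋃ x ∈ s, t x).ncard ≤ m * n := by
  have hfin : (⋃ x ∈ s, t x).Finite := hs.biUnion fun x hx => (h x hx).1
  refine ⟨hfin, le_trans ?_ (Nat.mul_le_mul_right n hm)⟩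
  clear hm hfin
  induction s, hs using Set.Finite.induction_on with
  | empty => simp
  | @insert a s ha hs ih =>
    rw [Set.biUnion_insert, Set.ncard_insert_of_notMem ha hs, Nat.succ_mul, Nat.add_comm]
    exact (Set.ncard_union_le _ _).trans
      (Nat.add_le_add (h a (by simp)).2 (ih fun x hx => h x (by simp [hx])))

theorem main {d : ℕ} (T : Finset (HeightOneSpectrum (𝓞 K))) (hd : 2 ≤ d)
    (φ : P1Map K d) (hgr : GoodReductionOutside φ T)
    (P : P1 K) (hP : Function.minimalPeriod φ.toFun P = 3) :
    (TailOf φ P).Finite ∧ (TailOf φ P).ncard ≤ L3const d (sCard K T) := by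
  set f := φ.toFun with hf
  set B := Bconst (sCard K T) with hB
  have hper : Function.IsPeriodicPt f 3 P := hP ▸ Function.isPeriodicPt_minimalPeriod f P
  have hmem : P ∈ Function.periodicPts f := ⟨3, by norm_num, hper⟩
  let cyc : P1 K → Prop := fun c => ∃ j, f^[j] P = c
  have cyc3 : ∀ c, cyc c → f^[3] c = c := by
    rintro _ ⟨j, rfl⟩; exact it3 f hper j
  have cycit : ∀ c n, cyc c → cyc (f^[n] c) := by
    rintro _ n ⟨j, rfl⟩; exact ⟨n + j, Function.iterate_add_apply _ _ _ _⟩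
  have cycne : ∀ c r, cyc c → 0 < r → r < 3 → c ≠ f^[r] c := by
    rintro _ r ⟨j, rfl⟩ h0 h3 h
    have h1 : Function.minimalPeriod f (f^[j] P) = 3 := by
      rw [Function.minimalPeriod_apply_iterate hmem, hP]
    exact Function.not_isPeriodicPt_of_pos_of_lt_minimalPeriod h0.ne' (h1 ▸ h3) h.symm
  have cycper : ∀ c, cyc c → IsPeriodicPoint φ c := fun c h => ⟨3, by norm_num, cyc3 c h⟩
  -- bound for the sets `A_r(U)`
  have hA : ∀ r, 0 < r → r < 3 → ∀ U, ¬ IsPeriodicPoint φ U → cyc (f^[3] U) →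
      (ASet φ r U).Finite ∧ (ASet φ r U).ncard ≤ B - 1 := by
    intro r h0 h3 U hU hc
    have := ASet_bound φ T hgr r U hU (cyc3 _ hc) (cycne _ r hc h0 h3)
    exact ⟨this.1, by have := this.2; omega⟩
  let T0 : Set (P1 K) := {Q | ¬ IsPeriodicPoint φ Q ∧ cyc (f Q)}
  have hT0 : T0.Finite ∧ T0.ncard ≤ 3 * (d - 1) := by
    have h1 := ncard_bU (s := (Finset.range 3 : Set ℕ)) (m := 3) (n := d - 1)
      (t := fun i => {Q | ¬ IsPeriodicPoint φ Q ∧ f Q = f^[i] P}) (Finset.finite_toSet _)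
      (by simp) (by
        intro i _
        obtain ⟨hfin, hle⟩ := fiber_le (by omega : 1 ≤ d) φ (f^[i] P)
        have hci : cyc (f^[i] P) := ⟨i, rfl⟩
        have hmem : f^[2] (f^[i] P) ∈ {Q | φ.toFun Q = f^[i] P} := by
          have := cyc3 _ hci
          rwa [Function.iterate_succ_apply'] at this
        have hsub : {Q | ¬ IsPeriodicPoint φ Q ∧ f Q = f^[i] P} ⊆
            {Q | φ.toFun Q = f^[i] P} \ {f^[2] (f^[i] P)} := by
          rintro Q ⟨hQ, hQ'⟩
          refine ⟨hQ', ?_⟩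
          intro h
          rw [Set.mem_singleton_iff] at h
          exact hQ (h ▸ cycper _ (cycit _ 2 hci))
        refine ⟨hfin.subset (hsub.trans Set.diff_subset), ?_⟩
        refine (Set.ncard_le_ncard hsub (hfin.subset Set.diff_subset)).trans ?_
        rw [Set.ncard_diff_singleton_of_mem hmem]
        omega)
    have hsub : T0 ⊆ ⋃ i ∈ (Finset.range 3 : Set ℕ),
        {Q | ¬ IsPeriodicPoint φ Q ∧ f Q = f^[i] P} := by
      rintro Q ⟨hQ, j, hj⟩
      simp only [Set.mem_iUnion]
      refine ⟨j % 3, by simp [Nat.mod_lt], hQ, ?_⟩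
      rw [← hj, itmod f hper j]
    exact ⟨h1.1.subset hsub, (Set.ncard_le_ncard hsub h1.1).trans h1.2⟩
  let W : P1 K → Set (P1 K) := fun t => ({t} ∪ ASet φ 1 t) ∪
    (ASet φ 2 t ∪ ⋃ U ∈ {U | U ∈ ASet φ 1 t ∧ f U = t}, ASet φ 2 U)
  have hW : ∀ t ∈ T0, (W t).Finite ∧ (W t).ncard ≤ 1 + (B - 1) + ((B - 1) + (B - 1) * (B - 1)) := by
    rintro t ⟨ht, htc⟩
    have a1 := hA 1 (by norm_num) (by norm_num) t ht (cycit _ 2 htc)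
    have a2 := hA 2 (by norm_num) (by norm_num) t ht (cycit _ 2 htc)
    have a0 : {U | U ∈ ASet φ 1 t ∧ f U = t} ⊆ ASet φ 1 t := fun U h => h.1
    have a3 := ncard_bU (s := {U | U ∈ ASet φ 1 t ∧ f U = t}) (t := fun U => ASet φ 2 U)
      (m := B - 1) (n := B - 1) (a1.1.subset a0) ((Set.ncard_le_ncard a0 a1.1).trans a1.2) (by
        rintro U ⟨-, hU⟩
        refine hA 2 (by norm_num) (by norm_num) U ?_ ?_
        · rintro ⟨n, hn, h⟩
          refine ht ⟨n, hn, ?_⟩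
          rw [← hU, ← hf, ← Function.iterate_succ_apply, Function.iterate_succ_apply', h]
        · have : f^[3] U = f^[1] (f (f U)) := rfl
          rw [this, hU]; exact cycit _ 1 htc)
    refine ⟨((Set.finite_singleton t).union a1.1).union (a2.1.union a3.1), ?_⟩
    refine (Set.ncard_union_le _ _).trans (Nat.add_le_add ?_ ?_)
    · refine (Set.ncard_union_le _ _).trans (Nat.add_le_add ?_ a1.2)
      simp
    · exact (Set.ncard_union_le _ _).trans (Nat.add_le_add a2.2 a3.2)
  have hfin := ncard_bU hT0.1 hT0.2 hW
  have hsub : TailOf φ P ⊆ ⋃ t ∈ T0, W t := by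
    rintro Q ⟨hQ, n, hn⟩
    have hex : ∃ n, cyc (f^[n] Q) := ⟨n, 0, hn.symm⟩
    obtain ⟨m, hm, hmin⟩ : ∃ m, cyc (f^[m] Q) ∧ ∀ i < m, ¬ cyc (f^[i] Q) :=
      ⟨Nat.find hex, Nat.find_spec hex, fun i hi => Nat.find_min hex hi⟩
    have hm0 : m ≠ 0 := by
      rintro rfl
      exact hQ (cycper _ hm)
    obtain ⟨k, rfl⟩ := Nat.exists_eq_succ_of_ne_zero hm0
    have hkt : ¬ cyc (f^[k] Q) := hmin k (Nat.lt_succ_self k)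
    rw [Nat.succ_eq_add_one, Function.iterate_succ_apply'] at hm
    set t := f^[k] Q with htdef
    have htp : ¬ IsPeriodicPoint φ t := by
      rintro ⟨n, hn, h⟩
      apply hkt
      have h2 : Function.IsPeriodicPt f (n * 3) t := Function.IsPeriodicPt.mul_const h 3
      have h3 : f^[n * 3 - 1] (f t) = t := by
        rw [← Function.iterate_succ_apply, Nat.succ_eq_add_one,
          Nat.sub_add_cancel (by omega)]
        exact h2
      rw [← h3]
      exact cycit _ _ hm
    simp only [Set.mem_iUnion]
    refine ⟨t, ⟨htp, hm⟩, ?_⟩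
    have hcj : ∀ j, 0 < j → cyc (f^[j] t) := by
      intro j hj
      obtain ⟨i, rfl⟩ := Nat.exists_eq_succ_of_ne_zero hj.ne'
      exact cycit _ i hm
    rcases (by omega : k = 0 ∨ k % 3 = 1 ∨ k % 3 = 2 ∨ (0 < k ∧ k % 3 = 0)) with h | h | h | ⟨h0, h⟩
    · subst h
      exact Or.inl (Or.inl rfl)
    · exact Or.inl (Or.inr ⟨k, h, rfl, cyc3 _ (hcj k (by omega))⟩)
    · exact Or.inr (Or.inl ⟨k, h, rfl, cyc3 _ (hcj k (by omega))⟩)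
    · refine Or.inr (Or.inr ?_)
      obtain ⟨i, rfl⟩ := Nat.exists_eq_succ_of_ne_zero h0.ne'
      have hU : f (f^[i] Q) = t := by rw [htdef, Function.iterate_succ_apply']
      simp only [Set.mem_iUnion]
      refine ⟨f^[i] Q, ⟨⟨1, rfl, hU, cyc3 _ (hcj 1 one_pos)⟩, hU⟩, i, by omega, rfl, ?_⟩
      obtain ⟨l, rfl⟩ : ∃ l, i = l + 1 := ⟨i - 1, by omega⟩
      have : f^[l + 1] (f^[l + 1] Q) = f^[l] t := by
        rw [Function.iterate_succ_apply f l, hU]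
      rw [← hf, this]
      exact cyc3 _ (hcj l (by omega))
  refine ⟨hfin.1.subset hsub, (Set.ncard_le_ncard hsub hfin.1).trans (hfin.2.trans ?_)⟩
  have hBpos : 1 ≤ B := Nat.one_le_two_pow
  obtain ⟨N, hN⟩ : ∃ N, B = N + 1 := ⟨B - 1, by omega⟩
  unfold L3const
  rw [← hB, hN, Nat.add_sub_cancel]
  calc 3 * (d - 1) * (1 + N + (N + N * N)) = (3 * (1 + N + (N + N * N))) * (d - 1) := by ring
    _ ≤ _ := Nat.mul_le_mul_right _ (by nlinarith)

end Dyn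
end TailBound

/-- **Lemma (tail of a point of period three).** If `P ∈ ℙ¹(K)` is a periodic point of `φ` of
period `3`, then `|Tail(φ,K,P)| ≤ L₃(d,|S|) = ((1 + 3B(|S|))B(|S|) + 1)(d-1)`. -/
theorem tailOf_period_three_bound
    {K : Type*} [Field K] [NumberField K]
    (T : Finset (HeightOneSpectrum (𝓞 K))) {d : ℕ} (hd : 2 ≤ d)
    (φ : P1Map K d) (hgr : GoodReductionOutside φ T)
    (P : P1 K) (hP : Function.minimalPeriod φ.toFun P = 3) :
    (TailOf φ P).Finite ∧ (TailOf φ P).ncard ≤ L3const d (sCard K T) := by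
  exact TailBound.main T hd φ hgr P hP
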